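/- arXiv:1305.2551 — 3 statements merged into one kernel-verified Lean document; each statement's English description precedes it below -/
import Mathlib

section
/- Let P and Q be finite ranked posets. If both P and Q have the LYM property and are log-concave, then the Cartesian product P × Q has the LYM property and is log-concave. -/
open scoped Classical

/-- The LYM property of a finite ranked poset with rank function `rank`. -/
def PosetLYM {P : Type*} [Fintype P] [PartialOrder P] (rank : P → ℕ) : Prop :=
  ∀ A : Finset P, IsAntichain (· ≤ ·) (A : Set P) →
    ∑ a ∈ A, (1 : ℚ) / (Finset.univ.filter (fun b => rank b = rank a)).card ≤ 1

/-- Log-concavity of the sequence of sizes of the rank levels. -/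
def PosetLogConcave {P : Type*} [Fintype P] [PartialOrder P] (rank : P → ℕ) : Prop :=
  ∀ i : ℕ, (Finset.univ.filter (fun b : P => rank b = i)).card *
      (Finset.univ.filter (fun b : P => rank b = i + 2)).card ≤
    (Finset.univ.filter (fun b : P => rank b = i + 1)).card ^ 2

/-!
Averaging over chains, as linear programming duality allows in a poset with the LYM property,
reduces the LYM property of `P × Q` to a statement about a product of two chains, that is, about an
antichain in the grid `ℕ × ℕ` whose points `(i, j)` carry the weight `a i * b j / c (i + j)`, where
`a` and `b` are the level sizes of `P` and `Q` and `c` is their Cauchy product. For log-concave `a`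
and `b` without internal zeros, the fraction of the `(i + j)`-th level of the grid that lies weakly
to the left of `(i, j)` increases as `i` increases and `j` decreases, so the weights along an
antichain are disjoint jumps of a quantity bounded by one. The levels of `P` have no internal zeros
because an element with nothing above it in some higher nonempty level would extend that level to a
larger antichain. The Cauchy product inherits log-concavity through the four functions theorem,
applied to minors of Toeplitz matrices.
-/

section ChainsAndAntichains

variable {P Q K : Type*} [PartialOrder P] [PartialOrder Q]

theorem exists_minimal_isChain_insert {T C : Finset P} (hT : T.Nonempty) (hCT : C ⊆ T)
    (hC : IsChain (· ≤ ·) (C : Set P)) :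
    ∃ a, Minimal (· ∈ T) a ∧ IsChain (· ≤ ·) ((insert a C : Finset P) : Set P) := by
  rcases C.eq_empty_or_nonempty with rfl | hne
  · obtain ⟨a, ha⟩ := T.exists_minimal hT
    exact ⟨a, ha, by simp⟩
  · obtain ⟨m, hm⟩ := C.exists_minimal hne
    obtain ⟨a, ham, ha⟩ := T.exists_le_minimal (hCT hm.prop)
    refine ⟨a, ha, ?_⟩
    rw [Finset.coe_insert]
    refine hC.insert fun x hx _ => Or.inl (ham.trans ?_)
    exact (hC.total hm.prop hx).elim id (hm.le_of_le hx)

theorem isAntichain_fiber_of_strictMono {α : Type*} [Preorder α] {r : P → α} (hr : StrictMono r)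
    (i : α) : IsAntichain (· ≤ ·) {x | r x = i} := fun _ hx _ hy hne hle =>
  (hr (hle.lt_of_ne hne)).ne (hx.trans hy.symm)

theorem le_of_isChain_of_strictMono {α : Type*} [Preorder α] {r : P → α} (hr : StrictMono r)
    {C : Set P} (hC : IsChain (· ≤ ·) C) {x y : P} (hx : x ∈ C) (hy : y ∈ C) (hxy : r x ≤ r y) :
    x ≤ y :=
  (hC.total hx hy).elim id fun hyx => (hyx.eq_of_not_lt fun hlt => (hr hlt).not_ge hxy).ge

variable [CommRing K] [LinearOrder K] [IsStrictOrderedRing K]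

theorem sum_sub_ite_minimal_le {T : Finset P} (hT : T.Nonempty) {f : P → K} {ε M : K}
    (hε : 0 ≤ ε) (hf : ∀ x ∈ T, 0 ≤ f x - if Minimal (· ∈ T) x then ε else 0)
    (hM : ∀ C ⊆ T, IsChain (· ≤ ·) (C : Set P) → ∑ x ∈ C, f x ≤ M) {C : Finset P} (hCT : C ⊆ T)
    (hC : IsChain (· ≤ ·) (C : Set P)) :
    ∑ x ∈ C, (f x - if Minimal (· ∈ T) x then ε else 0) ≤ M - ε := by
  obtain ⟨a, ha, haC⟩ := exists_minimal_isChain_insert hT hCT hC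
  have haCT : insert a C ⊆ T := Finset.insert_subset ha.prop hCT
  have hle : ε ≤ ∑ x ∈ insert a C, if Minimal (· ∈ T) x then ε else 0 := by
    have hle := Finset.single_le_sum (f := fun x => if Minimal (· ∈ T) x then ε else 0)
      (fun x _ => ite_nonneg hε le_rfl) (C.mem_insert_self a)
    rwa [if_pos ha] at hle
  calc ∑ x ∈ C, (f x - if Minimal (· ∈ T) x then ε else 0)
      ≤ ∑ x ∈ insert a C, (f x - if Minimal (· ∈ T) x then ε else 0) :=
        Finset.sum_le_sum_of_subset_of_nonneg (C.subset_insert a) fun x hx _ => hf x (haCT hx)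
    _ = ∑ x ∈ insert a C, f x - ∑ x ∈ insert a C, if Minimal (· ∈ T) x then ε else 0 :=
        Finset.sum_sub_distrib _ _
    _ ≤ M - ε := sub_le_sub (hM _ haCT haC) hle

/- Weak LP duality between chains and antichains: subtract from `f` a multiple `ε` of the indicator
of the minimal elements of `T`, with `ε` as large as possible. Every chain extends to one through
a minimal element, so all chain sums drop by `ε`, and some element becomes free to be erased. -/
theorem sum_mul_le_of_forall_isChain_sum_le {w : P → K}
    (hw : ∀ A : Finset P, IsAntichain (· ≤ ·) (A : Set P) → ∑ a ∈ A, w a ≤ 1)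
    (T : Finset P) {f : P → K} {M : K} (hf : ∀ x ∈ T, 0 ≤ f x)
    (hM : ∀ C ⊆ T, IsChain (· ≤ ·) (C : Set P) → ∑ x ∈ C, f x ≤ M) :
    ∑ x ∈ T, f x * w x ≤ M := by
  induction T using Finset.eraseInduction generalizing f M with | _ T ih
  rcases T.eq_empty_or_nonempty with rfl | hT
  · simpa using hM ∅ (Finset.empty_subset _) (by simp)
  set A : Finset P := {x ∈ T | Minimal (· ∈ T) x} with hA
  have hA_anti : IsAntichain (· ≤ ·) (A : Set P) :=
    (setOfPred_minimal_antichain (· ∈ T)).subset fun x hx => (Finset.mem_filter.1 hx).2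
  obtain ⟨x₀, hx₀⟩ := T.exists_minimal hT
  obtain ⟨m, hm, hm_le⟩ := A.exists_min_image f ⟨x₀, Finset.mem_filter.2 ⟨hx₀.prop, hx₀⟩⟩
  obtain ⟨hmT, hm_min⟩ := Finset.mem_filter.1 hm
  set g : P → K := fun x => f x - if Minimal (· ∈ T) x then f m else 0 with hg
  have hg_nonneg : ∀ x ∈ T, 0 ≤ g x := fun x hx => by
    simp only [hg]
    split_ifs with hx_min
    · exact sub_nonneg.2 (hm_le x (Finset.mem_filter.2 ⟨hx, hx_min⟩))
    · simpa using hf x hx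
  have hgm : g m = 0 := by simp [hg, hm_min]
  have hg_sum : ∑ x ∈ T.erase m, g x * w x ≤ M - f m :=
    ih m hmT (fun x hx => hg_nonneg x (Finset.mem_of_mem_erase hx)) fun C hC hC_chain =>
      sum_sub_ite_minimal_le hT (hf m hmT) hg_nonneg hM (hC.trans (T.erase_subset m)) hC_chain
  calc ∑ x ∈ T, f x * w x = ∑ x ∈ T, g x * w x + f m * ∑ x ∈ A, w x := by
        rw [hA, Finset.mul_sum, Finset.sum_filter, ← Finset.sum_add_distrib]
        refine Finset.sum_congr rfl fun x _ => ?_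
        simp only [hg]
        split_ifs <;> ring
    _ = ∑ x ∈ T.erase m, g x * w x + f m * ∑ x ∈ A, w x := by
        rw [Finset.sum_erase _ (by rw [hgm, zero_mul])]
    _ ≤ (M - f m) + f m * 1 := by
        gcongr
        exacts [hf m hmT, hw A hA_anti]
    _ = M := by ring

theorem sum_sum_mul_le_of_forall_isChain_sum_le [Fintype P] [Fintype Q] {u : P → K} {v : Q → K}
    (hu : ∀ A : Finset P, IsAntichain (· ≤ ·) (A : Set P) → ∑ x ∈ A, u x ≤ 1)
    (hv : ∀ A : Finset Q, IsAntichain (· ≤ ·) (A : Set Q) → ∑ y ∈ A, v y ≤ 1)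
    (hv_nonneg : ∀ y, 0 ≤ v y) {F : P → Q → K} {M : K} (hF : ∀ x y, 0 ≤ F x y)
    (hM : ∀ (C : Finset P) (D : Finset Q), IsChain (· ≤ ·) (C : Set P) →
      IsChain (· ≤ ·) (D : Set Q) → ∑ x ∈ C, ∑ y ∈ D, F x y ≤ M) :
    ∑ x, ∑ y, F x y * u x * v y ≤ M := by
  calc ∑ x, ∑ y, F x y * u x * v y = ∑ x, (∑ y, F x y * v y) * u x := by
        simp only [Finset.sum_mul, mul_right_comm]
    _ ≤ M := sum_mul_le_of_forall_isChain_sum_le hu _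
        (fun x _ => Finset.sum_nonneg fun y _ => mul_nonneg (hF x y) (hv_nonneg y)) ?_
  intro C _ hC
  calc ∑ x ∈ C, ∑ y, F x y * v y = ∑ y, (∑ x ∈ C, F x y) * v y := by
        rw [Finset.sum_comm]
        simp only [Finset.sum_mul]
    _ ≤ M := sum_mul_le_of_forall_isChain_sum_le hv _
        (fun y _ => Finset.sum_nonneg fun x _ => hF x y) fun D _ hD => ?_
  rw [Finset.sum_comm]
  exact hM C D hC hD

end ChainsAndAntichains

section Sequences

open Finset.HasAntidiagonal (antidiagonal mem_antidiagonal)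

variable {R : Type*} [CommSemiring R]

/-- The Cauchy product (convolution) of two sequences; for the level sizes of two ranked posets it
gives the level sizes of their product. -/
def cauchyProd (a b : ℕ → R) (k : ℕ) : R :=
  ∑ p ∈ antidiagonal k, a p.1 * b p.2

/-- The part of the Cauchy product `cauchyProd a b k` coming from the first `i` terms of `a`. -/
def cauchyProdBelow (a b : ℕ → R) (i k : ℕ) : R :=
  ∑ p ∈ antidiagonal k with p.1 < i, a p.1 * b p.2

/-- The Toeplitz matrix with entries `b (k - s)`, where `b` is extended by zero to negative
indices; it turns Cauchy products into matrix products. -/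
def toeplitz (b : ℕ → R) (k s : ℕ) : R :=
  if s ≤ k then b (k - s) else 0

theorem cauchyProd_comm (a b : ℕ → R) : cauchyProd a b = cauchyProd b a := by
  funext k
  unfold cauchyProd
  rw [← Finset.Nat.sum_antidiagonal_swap]
  exact Finset.sum_congr rfl fun p _ => mul_comm _ _

theorem cauchyProdBelow_eq_sum_toeplitz (a b : ℕ → R) (i k : ℕ) :
    cauchyProdBelow a b i k = ∑ s ∈ Finset.range i, toeplitz b k s * a s := by
  simp only [cauchyProdBelow, toeplitz, ite_mul, zero_mul]
  rw [Finset.sum_filter, Finset.Nat.sum_antidiagonal_eq_sum_range_succ_mk, ← Finset.sum_filter,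
    ← Finset.sum_filter]
  refine Finset.sum_congr ?_ fun s _ => mul_comm _ _
  ext s
  simp only [Finset.mem_filter, Finset.mem_range]
  lia

theorem cauchyProdBelow_of_lt (a b : ℕ → R) {i k : ℕ} (h : k < i) :
    cauchyProdBelow a b i k = cauchyProd a b k := by
  unfold cauchyProdBelow cauchyProd
  rw [Finset.filter_true_of_mem]
  intro p hp
  rw [mem_antidiagonal] at hp
  lia

theorem cauchyProd_eq_sum_toeplitz (a b : ℕ → R) {k n : ℕ} (h : k < n) :
    cauchyProd a b k = ∑ s ∈ Finset.range n, toeplitz b k s * a s := by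
  rw [← cauchyProdBelow_eq_sum_toeplitz, cauchyProdBelow_of_lt a b h]

theorem cauchyProd_eq_sum_toeplitz_mul_toeplitz_one (a b : ℕ → R) {k n : ℕ} (h : k + 1 < n) :
    cauchyProd a b k = ∑ s ∈ Finset.range n, toeplitz b (k + 1) s * toeplitz a s 1 := by
  rw [← cauchyProd_eq_sum_toeplitz (fun s => toeplitz a s 1) b h]
  simp [cauchyProd, Finset.Nat.sum_antidiagonal_succ, toeplitz]

theorem cauchyProdBelow_add_cauchyProdBelow (a b : ℕ → R) (i j : ℕ) :
    cauchyProdBelow a b (i + 1) (i + j) + cauchyProdBelow b a j (i + j) =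
      cauchyProd a b (i + j) := by
  have hcompl : cauchyProdBelow b a j (i + j) =
      ∑ p ∈ antidiagonal (i + j) with ¬ p.1 < i + 1, a p.1 * b p.2 := by
    rw [cauchyProdBelow, Finset.sum_filter, Finset.sum_filter, ← Finset.Nat.sum_antidiagonal_swap]
    refine Finset.sum_congr rfl fun p hp => ?_
    rw [mem_antidiagonal] at hp
    exact if_congr (by simp only [Prod.fst_swap]; lia) (mul_comm _ _) rfl
  rw [hcompl]
  exact Finset.sum_filter_add_sum_filter_not _ _ _

theorem cauchyProdBelow_succ (a b : ℕ → R) (i j : ℕ) :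
    cauchyProdBelow a b (i + 1) (i + j) = cauchyProdBelow a b i (i + j) + a i * b j := by
  simp [cauchyProdBelow_eq_sum_toeplitz, Finset.sum_range_succ, toeplitz, mul_comm]

variable [LinearOrder R]

/-- Strong log-concavity of a nonnegative sequence: log-concavity without internal zeros, expressed
as nonnegativity of the two-by-two minors with adjacent rows. -/
structure IsStronglyLogConcave (a : ℕ → R) : Prop where
  nonneg : ∀ i, 0 ≤ a i
  mul_le_mul : ∀ ⦃i j⦄, i ≤ j → a i * a (j + 1) ≤ a (i + 1) * a j

variable {a b : ℕ → R}

namespace IsStronglyLogConcave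

theorem mul_add_le_add_mul (ha : IsStronglyLogConcave a) {i j : ℕ} (hij : i ≤ j) (d : ℕ) :
    a i * a (j + d) ≤ a (i + d) * a j := by
  induction d generalizing i with
  | zero => rfl
  | succ d ih =>
    rcases hij.eq_or_lt with rfl | hlt
    · rw [mul_comm]
    · calc a i * a (j + d + 1) ≤ a (i + 1) * a (j + d) := ha.mul_le_mul (by lia)
        _ ≤ a (i + 1 + d) * a j := ih hlt
        _ = a (i + (d + 1)) * a j := by rw [add_assoc, add_comm 1 d]

theorem toeplitz_nonneg (ha : IsStronglyLogConcave a) (k s : ℕ) : 0 ≤ toeplitz a k s :=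
  ite_nonneg (ha.nonneg _) le_rfl

end IsStronglyLogConcave

variable [IsStrictOrderedRing R]

theorem cauchyProdBelow_nonneg (ha : ∀ i, 0 ≤ a i) (hb : ∀ i, 0 ≤ b i) (i k : ℕ) :
    0 ≤ cauchyProdBelow a b i k :=
  Finset.sum_nonneg fun _ _ => mul_nonneg (ha _) (hb _)

theorem cauchyProd_pos (ha : ∀ i, 0 ≤ a i) (hb : ∀ i, 0 ≤ b i) {i j : ℕ} (hi : 0 < a i)
    (hj : 0 < b j) : 0 < cauchyProd a b (i + j) :=
  Finset.sum_pos' (fun _ _ => mul_nonneg (ha _) (hb _)) ⟨(i, j), by simp, mul_pos hi hj⟩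

theorem isStronglyLogConcave_of_mul_le_sq (h_nonneg : ∀ i, 0 ≤ a i)
    (h_sq : ∀ i, a i * a (i + 2) ≤ a (i + 1) ^ 2)
    (h_between : ∀ ⦃i j k⦄, i ≤ j → j ≤ k → 0 < a i → 0 < a k → 0 < a j) :
    IsStronglyLogConcave a := by
  refine ⟨h_nonneg, fun i j hij => ?_⟩
  induction j, hij using Nat.le_induction with
  | base => rw [mul_comm]
  | succ j hij ih =>
    rcases (h_nonneg i).eq_or_lt with hi | hi
    · simpa [← hi] using mul_nonneg (h_nonneg (i + 1)) (h_nonneg (j + 1))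
    rcases (h_nonneg (j + 2)).eq_or_lt with hj | hj
    · simpa [← hj] using mul_nonneg (h_nonneg (i + 1)) (h_nonneg (j + 1))
    have hpos : 0 < a j * a (j + 1) :=
      mul_pos (h_between hij (by lia) hi hj) (h_between (by lia) (by lia) hi hj)
    refine le_of_mul_le_mul_right ?_ hpos
    calc a i * a (j + 2) * (a j * a (j + 1)) = a i * a (j + 1) * (a j * a (j + 2)) := by ring
      _ ≤ a (i + 1) * a j * a (j + 1) ^ 2 :=
          mul_le_mul ih (h_sq j) (mul_nonneg (h_nonneg _) (h_nonneg _))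
            (mul_nonneg (h_nonneg _) (h_nonneg _))
      _ = a (i + 1) * a (j + 1) * (a j * a (j + 1)) := by ring

theorem sum_range_mul_sum_range_le [ExistsAddOfLE R] {f₁ f₂ f₃ f₄ : ℕ → R} (h₁ : 0 ≤ f₁)
    (h₂ : 0 ≤ f₂) (h₃ : 0 ≤ f₃) (h₄ : 0 ≤ f₄)
    (h_le : ∀ ⦃s t⦄, s ≤ t → f₁ s * f₂ t ≤ f₃ s * f₄ t)
    (h_ge : ∀ ⦃s t⦄, s ≤ t → f₁ t * f₂ s ≤ f₃ s * f₄ t) {m n : ℕ} (hmn : m ≤ n) :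
    (∑ s ∈ Finset.range m, f₁ s) * ∑ t ∈ Finset.range n, f₂ t ≤
      (∑ s ∈ Finset.range m, f₃ s) * ∑ t ∈ Finset.range n, f₄ t := by
  have h : ∀ s t, f₁ s * f₂ t ≤ f₃ (s ⊓ t) * f₄ (s ⊔ t) := fun s t => by
    rcases le_total s t with hst | hts
    · rw [inf_eq_left.2 hst, sup_eq_right.2 hst]
      exact h_le hst
    · rw [inf_eq_right.2 hts, sup_eq_left.2 hts]
      exact h_ge hts
  refine (four_functions_theorem f₁ f₂ f₃ f₄ h₁ h₂ h₃ h₄ h _ _).trans ?_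
  refine mul_le_mul (Finset.sum_le_sum_of_subset_of_nonneg ?_ fun s _ _ => h₃ s)
    (Finset.sum_le_sum_of_subset_of_nonneg ?_ fun t _ _ => h₄ t)
    (Finset.sum_nonneg fun t _ => h₄ t) (Finset.sum_nonneg fun s _ => h₃ s)
  · refine Finset.infs_subset_iff.2 fun s hs t _ => ?_
    simp only [Finset.mem_range] at hs ⊢
    exact inf_le_left.trans_lt hs
  · refine Finset.sups_subset_iff.2 fun s hs t ht => ?_
    simp only [Finset.mem_range] at hs ht ⊢
    exact max_lt (hs.trans_le hmn) ht

namespace IsStronglyLogConcave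

theorem pos_of_le_of_le (ha : IsStronglyLogConcave a) {i j k : ℕ} (hij : i ≤ j) (hjk : j ≤ k)
    (hi : 0 < a i) (hk : 0 < a k) : 0 < a j := by
  obtain ⟨d, rfl⟩ := Nat.exists_eq_add_of_le hij
  obtain ⟨e, rfl⟩ := Nat.exists_eq_add_of_le hjk
  have hle : a i * a (i + d + e) ≤ a (i + d) * a (i + e) := by
    rw [add_right_comm]
    exact ha.mul_add_le_add_mul (Nat.le_add_right i e) d
  exact pos_of_mul_pos_left ((mul_pos hi hk).trans_le hle) (ha.nonneg _)

theorem toeplitz_mul_toeplitz_le (ha : IsStronglyLogConcave a) {s t k l : ℕ} (hst : s ≤ t)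
    (hkl : k ≤ l) :
    toeplitz a l s * toeplitz a k t ≤ toeplitz a k s * toeplitz a l t := by
  by_cases htk : t ≤ k
  · have hle := ha.mul_add_le_add_mul (Nat.sub_le_sub_left hst k) (l - k)
    rw [show k - s + (l - k) = l - s by lia, show k - t + (l - k) = l - t by lia] at hle
    simp only [toeplitz, htk, hst.trans htk, htk.trans hkl, hst.trans (htk.trans hkl), if_true]
    rwa [mul_comm, mul_comm (a (k - s))]
  · rw [toeplitz, toeplitz, if_neg htk, mul_zero]
    exact mul_nonneg (ha.toeplitz_nonneg _ _) (ha.toeplitz_nonneg _ _)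

variable [ExistsAddOfLE R]

protected theorem cauchyProd (ha : IsStronglyLogConcave a) (hb : IsStronglyLogConcave b) :
    IsStronglyLogConcave (cauchyProd a b) where
  nonneg k := Finset.sum_nonneg fun _ _ => mul_nonneg (ha.nonneg _) (hb.nonneg _)
  mul_le_mul i j hij := by
    rw [cauchyProd_eq_sum_toeplitz_mul_toeplitz_one a b (show i + 1 < j + 2 by lia),
      cauchyProd_eq_sum_toeplitz a b (show j + 1 < j + 2 by lia),
      cauchyProd_eq_sum_toeplitz a b (show i + 1 < j + 2 by lia),
      cauchyProd_eq_sum_toeplitz_mul_toeplitz_one a b (show j + 1 < j + 2 by lia)]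
    refine sum_range_mul_sum_range_le
      (fun s => mul_nonneg (hb.toeplitz_nonneg _ s) (ha.toeplitz_nonneg s _))
      (fun s => mul_nonneg (hb.toeplitz_nonneg _ s) (ha.nonneg s))
      (fun s => mul_nonneg (hb.toeplitz_nonneg _ s) (ha.nonneg s))
      (fun s => mul_nonneg (hb.toeplitz_nonneg _ s) (ha.toeplitz_nonneg s _))
      (fun s t hst => ?_) (fun s t hst => ?_) le_rfl
    · have hshift : toeplitz a s 1 * a t ≤ a s * toeplitz a t 1 := by
        simpa [toeplitz, mul_comm] using ha.toeplitz_mul_toeplitz_le (Nat.zero_le 1) hst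
      convert mul_le_mul_of_nonneg_left hshift
        (mul_nonneg (hb.toeplitz_nonneg (i + 1) s) (hb.toeplitz_nonneg (j + 1) t)) using 1 <;> ring
    · convert mul_le_mul_of_nonneg_left
        (hb.toeplitz_mul_toeplitz_le hst (Nat.add_le_add_right hij 1))
        (mul_nonneg (ha.toeplitz_nonneg t 1) (ha.nonneg s)) using 1 <;> ring

theorem cauchyProdBelow_mul_cauchyProd_le (ha : ∀ i, 0 ≤ a i) (hb : IsStronglyLogConcave b)
    (i : ℕ) {k l : ℕ} (hkl : k ≤ l) :
    cauchyProdBelow a b i l * cauchyProd a b k ≤ cauchyProdBelow a b i k * cauchyProd a b l := by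
  rw [cauchyProdBelow_eq_sum_toeplitz, cauchyProdBelow_eq_sum_toeplitz,
    cauchyProd_eq_sum_toeplitz a b (show k < i + l + 1 by lia),
    cauchyProd_eq_sum_toeplitz a b (show l < i + l + 1 by lia)]
  have hterm (k : ℕ) : 0 ≤ fun s => toeplitz b k s * a s :=
    fun s => mul_nonneg (hb.toeplitz_nonneg k s) (ha s)
  refine sum_range_mul_sum_range_le (hterm l) (hterm k) (hterm k) (hterm l)
    (fun s t hst => ?_) (fun s t _ => (mul_comm _ _).le) (by lia)
  convert mul_le_mul_of_nonneg_left (hb.toeplitz_mul_toeplitz_le hst hkl)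
    (mul_nonneg (ha s) (ha t)) using 1 <;> ring

end IsStronglyLogConcave

end Sequences

section Grid

variable {K : Type*} [Field K] [LinearOrder K] [IsStrictOrderedRing K] {a b : ℕ → K}

namespace IsStronglyLogConcave

theorem cauchyProdBelow_div_cauchyProd_le (ha : IsStronglyLogConcave a)
    (hb : IsStronglyLogConcave b) {i j i' j' : ℕ} (hi : i ≤ i') (hj : j' ≤ j) (hai : 0 < a i)
    (hbj : 0 < b j) (hai' : 0 < a i') (hbj' : 0 < b j') :
    cauchyProdBelow a b (i + 1) (i + j) / cauchyProd a b (i + j) ≤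
      cauchyProdBelow a b (i' + 1) (i' + j') / cauchyProd a b (i' + j') := by
  have hpos {x y : ℕ} (hx : 0 < a x) (hy : 0 < b y) : 0 < cauchyProd a b (x + y) :=
    cauchyProd_pos ha.nonneg hb.nonneg hx hy
  have h_first : cauchyProdBelow a b (i + 1) (i + j) * cauchyProd a b (i + j') ≤
      cauchyProdBelow a b (i + 1) (i + j') * cauchyProd a b (i + j) :=
    cauchyProdBelow_mul_cauchyProd_le ha.nonneg hb _ (by lia)
  have h_second : cauchyProdBelow b a j' (i' + j') * cauchyProd a b (i + j') ≤
      cauchyProdBelow b a j' (i + j') * cauchyProd a b (i' + j') := by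
    rw [cauchyProd_comm a b]
    exact cauchyProdBelow_mul_cauchyProd_le hb.nonneg ha _ (by lia)
  calc cauchyProdBelow a b (i + 1) (i + j) / cauchyProd a b (i + j)
      ≤ cauchyProdBelow a b (i + 1) (i + j') / cauchyProd a b (i + j') :=
        (div_le_div_iff₀ (hpos hai hbj) (hpos hai hbj')).2 h_first
    _ ≤ cauchyProdBelow a b (i' + 1) (i' + j') / cauchyProd a b (i' + j') := by
        rw [div_le_div_iff₀ (hpos hai hbj') (hpos hai' hbj')]
        rw [← sub_eq_of_eq_add (cauchyProdBelow_add_cauchyProdBelow a b i j').symm,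
          ← sub_eq_of_eq_add (cauchyProdBelow_add_cauchyProdBelow a b i' j').symm]
        linarith

/- Each point of `S` contributes the jump at that point of the fraction of its rank with smaller or
equal first coordinate; along an antichain these fractions increase, so the jumps do not overlap. -/
theorem sum_div_cauchyProd_le_cauchyProdBelow_div (ha : IsStronglyLogConcave a)
    (hb : IsStronglyLogConcave b) (S : Finset (ℕ × ℕ)) (hpos : ∀ p ∈ S, 0 < a p.1 ∧ 0 < b p.2)
    (hS : IsAntichain (· ≤ ·) (S : Set (ℕ × ℕ))) {i j : ℕ} (hi : 0 < a i) (hj : 0 < b j)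
    (hbound : ∀ p ∈ S, p.1 ≤ i ∧ j ≤ p.2) :
    ∑ p ∈ S, a p.1 * b p.2 / cauchyProd a b (p.1 + p.2) ≤
      cauchyProdBelow a b (i + 1) (i + j) / cauchyProd a b (i + j) := by
  induction S using Finset.induction_on_max_value (fun p : ℕ × ℕ => p.1) generalizing i j with
  | empty =>
    exact div_nonneg (cauchyProdBelow_nonneg ha.nonneg hb.nonneg _ _)
      (cauchyProd_pos ha.nonneg hb.nonneg hi hj).le
  | insert p S hpS hmax ih =>
    obtain ⟨hap, hbp⟩ := hpos p (S.mem_insert_self p)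
    obtain ⟨hpi, hjp⟩ := hbound p (S.mem_insert_self p)
    have hsum : ∑ q ∈ S, a q.1 * b q.2 / cauchyProd a b (q.1 + q.2) ≤
        cauchyProdBelow a b p.1 (p.1 + p.2) / cauchyProd a b (p.1 + p.2) := by
      rcases S.eq_empty_or_nonempty with rfl | ⟨q₀, hq₀⟩
      · exact div_nonneg (cauchyProdBelow_nonneg ha.nonneg hb.nonneg _ _)
          (cauchyProd_pos ha.nonneg hb.nonneg hap hbp).le
      have hlt : ∀ q ∈ S, q.1 < p.1 ∧ p.2 < q.2 := fun q hq => by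
        have hqp : q ≠ p := ne_of_mem_of_not_mem hq hpS
        have hnle : ¬ q ≤ p := hS (S.mem_insert_of_mem hq) (S.mem_insert_self p) hqp
        have hnge : ¬ p ≤ q := hS (S.mem_insert_self p) (S.mem_insert_of_mem hq) hqp.symm
        have hle := hmax q hq
        simp only [Prod.le_def] at hnle hnge
        lia
      obtain ⟨haq₀, hbq₀⟩ := hpos q₀ (S.mem_insert_of_mem hq₀)
      obtain ⟨hq₀1, hq₀2⟩ := hlt q₀ hq₀
      have hle := ih (i := p.1 - 1) (j := p.2 + 1)
        (fun q hq => hpos q (S.mem_insert_of_mem hq))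
        (hS.subset (Finset.coe_subset.2 (S.subset_insert p)))
        (ha.pos_of_le_of_le (Nat.le_sub_one_of_lt hq₀1) (Nat.sub_le _ _) haq₀ hap)
        (hb.pos_of_le_of_le (Nat.le_succ _) hq₀2 hbp hbq₀)
        (fun q hq => by have := hlt q hq; lia)
      rwa [show p.1 - 1 + 1 = p.1 by lia, show p.1 - 1 + (p.2 + 1) = p.1 + p.2 by lia] at hle
    calc ∑ q ∈ insert p S, a q.1 * b q.2 / cauchyProd a b (q.1 + q.2)
        ≤ a p.1 * b p.2 / cauchyProd a b (p.1 + p.2) +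
            cauchyProdBelow a b p.1 (p.1 + p.2) / cauchyProd a b (p.1 + p.2) := by
          rw [Finset.sum_insert hpS]
          gcongr
      _ = cauchyProdBelow a b (p.1 + 1) (p.1 + p.2) / cauchyProd a b (p.1 + p.2) := by
          rw [cauchyProdBelow_succ, ← add_div, add_comm]
      _ ≤ cauchyProdBelow a b (i + 1) (i + j) / cauchyProd a b (i + j) :=
          ha.cauchyProdBelow_div_cauchyProd_le hb hpi hjp hap hbp hi hj

theorem sum_div_cauchyProd_le_one (ha : IsStronglyLogConcave a) (hb : IsStronglyLogConcave b)
    (S : Finset (ℕ × ℕ)) (hpos : ∀ p ∈ S, 0 < a p.1 ∧ 0 < b p.2)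
    (hS : IsAntichain (· ≤ ·) (S : Set (ℕ × ℕ))) :
    ∑ p ∈ S, a p.1 * b p.2 / cauchyProd a b (p.1 + p.2) ≤ 1 := by
  rcases S.eq_empty_or_nonempty with rfl | hne
  · simp
  obtain ⟨p, hp, hmax⟩ := S.exists_max_image Prod.fst hne
  obtain ⟨q, hq, hmin⟩ := S.exists_min_image Prod.snd hne
  have hap := (hpos p hp).1
  have hbq := (hpos q hq).2
  refine (ha.sum_div_cauchyProd_le_cauchyProdBelow_div hb S hpos hS hap hbq
    fun r hr => ⟨hmax r hr, hmin r hr⟩).trans ?_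
  rw [div_le_one (cauchyProd_pos ha.nonneg hb.nonneg hap hbq),
    ← cauchyProdBelow_add_cauchyProdBelow]
  exact le_add_of_nonneg_right (cauchyProdBelow_nonneg hb.nonneg ha.nonneg _ _)

theorem sum_div_cauchyProd_le_one_of_subset_product {P Q : Type*} [PartialOrder P]
    [PartialOrder Q] {r : P → ℕ} {s : Q → ℕ} (ha : IsStronglyLogConcave a)
    (hb : IsStronglyLogConcave b) (hr : StrictMono r) (hs : StrictMono s)
    (har : ∀ x, 0 < a (r x)) (hbs : ∀ y, 0 < b (s y)) {C : Finset P} {D : Finset Q}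
    (hC : IsChain (· ≤ ·) (C : Set P)) (hD : IsChain (· ≤ ·) (D : Set Q))
    {B : Finset (P × Q)} (hB : IsAntichain (· ≤ ·) (B : Set (P × Q))) (hBCD : B ⊆ C ×ˢ D) :
    ∑ x ∈ B, a (r x.1) * b (s x.2) / cauchyProd a b (r x.1 + s x.2) ≤ 1 := by
  set φ : P × Q → ℕ × ℕ := fun x => (r x.1, s x.2)
  have le_of_map_le {x y : P × Q} (hx : x ∈ B) (hy : y ∈ B) (hxy : φ x ≤ φ y) : x ≤ y := by
    obtain ⟨hx1, hx2⟩ := Finset.mem_product.1 (hBCD hx)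
    obtain ⟨hy1, hy2⟩ := Finset.mem_product.1 (hBCD hy)
    exact ⟨le_of_isChain_of_strictMono hr hC hx1 hy1 hxy.1,
      le_of_isChain_of_strictMono hs hD hx2 hy2 hxy.2⟩
  have hinj : Set.InjOn φ B := fun x hx y hy hxy =>
    (le_of_map_le hx hy hxy.le).antisymm (le_of_map_le hy hx hxy.ge)
  rw [← Finset.sum_image (f := fun p => a p.1 * b p.2 / cauchyProd a b (p.1 + p.2)) hinj]
  refine ha.sum_div_cauchyProd_le_one hb _ (fun p hp => ?_) ?_
  · obtain ⟨x, _, rfl⟩ := Finset.mem_image.1 hp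
    exact ⟨har x.1, hbs x.2⟩
  · rw [Finset.coe_image]
    rintro _ ⟨x, hx, rfl⟩ _ ⟨y, hy, rfl⟩ hne hle
    exact hne (congrArg φ (hB.eq hx hy (le_of_map_le hx hy hle)))

end IsStronglyLogConcave

end Grid

section RankedPosets

variable {P Q : Type*} {r : P → ℕ} {s : Q → ℕ}

section LevelSizes

variable [Fintype P] [Fintype Q]

/-- The number of elements of rank `i`, whose reciprocals are the weights in the LYM inequality;
it is cast to `ℚ` because these weights are rational. -/
noncomputable def levelSize (r : P → ℕ) (i : ℕ) : ℚ :=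
  ((Finset.univ.filter fun x => r x = i).card : ℚ)

theorem levelSize_nonneg (r : P → ℕ) (i : ℕ) : 0 ≤ levelSize r i :=
  Nat.cast_nonneg _

theorem levelSize_pos_iff {i : ℕ} : 0 < levelSize r i ↔ ∃ x, r x = i := by
  simp [levelSize, Finset.card_pos, Finset.Nonempty]

theorem levelSize_apply_pos (r : P → ℕ) (x : P) : 0 < levelSize r (r x) :=
  levelSize_pos_iff.2 ⟨x, rfl⟩

theorem levelSize_add_eq_cauchyProd (r : P → ℕ) (s : Q → ℕ) :
    levelSize (fun x : P × Q => r x.1 + s x.2) = cauchyProd (levelSize r) (levelSize s) := by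
  funext k
  unfold levelSize cauchyProd
  rw [Finset.card_eq_sum_card_fiberwise (f := fun x : P × Q => (r x.1, s x.2))
    (t := Finset.HasAntidiagonal.antidiagonal k) fun x hx => by simpa using hx]
  push_cast
  refine Finset.sum_congr rfl fun p hp => ?_
  rw [Finset.HasAntidiagonal.mem_antidiagonal] at hp
  rw [← Nat.cast_mul, ← Finset.card_product]
  congr 2
  ext ⟨x, y⟩
  simp only [Finset.mem_filter, Finset.mem_univ, true_and, Finset.mem_product, Prod.ext_iff,
    and_iff_right_iff_imp]
  rintro ⟨hx, hy⟩
  rw [hx, hy, hp]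

end LevelSizes

variable [PartialOrder P] [PartialOrder Q]

theorem strictMono_of_forall_covBy [Finite P] (hr : ∀ x y : P, x ⋖ y → r y = r x + 1) :
    StrictMono r := by
  have := Fintype.ofFinite P
  have := Fintype.toLocallyFiniteOrder (α := P)
  exact strictMono_iff_forall_covBy _ |>.2 fun x y hxy => (hr x y hxy).symm ▸ Nat.lt_succ_self _

theorem exists_rank_eq_of_le_of_le [Finite P] (hr : ∀ x y : P, x ⋖ y → r y = r x + 1)
    {x y : P} (hxy : x ≤ y) {k : ℕ} (hxk : r x ≤ k) (hky : k ≤ r y) : ∃ z, r z = k := by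
  obtain ⟨z, ⟨hzy, hzk⟩, hmax⟩ :=
    {z | z ≤ y ∧ r z ≤ k}.toFinite.exists_maximal ⟨x, hxy, hxk⟩
  refine ⟨z, hzk.eq_of_not_lt fun hlt => ?_⟩
  have hzy_lt : z < y := hzy.lt_of_ne fun h => (hlt.trans_le hky).ne (h ▸ rfl)
  obtain ⟨c, hzc, hcy⟩ := exists_covBy_le_of_lt hzy_lt
  exact hzc.lt.not_ge (hmax ⟨hcy, (hr z c hzc).trans_le hlt⟩ hzc.le)

variable [Fintype P] [Fintype Q]

theorem posetLYM_iff : PosetLYM r ↔ ∀ A : Finset P, IsAntichain (· ≤ ·) (A : Set P) →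
    ∑ x ∈ A, 1 / levelSize r (r x) ≤ 1 :=
  Iff.rfl

theorem PosetLYM.exists_le_rank_eq (hLYM : PosetLYM r) (hr : StrictMono r) {x z : P}
    (hxz : r x < r z) : ∃ y, x ≤ y ∧ r y = r z := by
  by_contra! hne
  set A : Finset P := {y | r y = r z}
  have hxA : x ∉ A := fun hx => hxz.ne (Finset.mem_filter.1 hx).2
  have hlevel : ∑ y ∈ A, 1 / levelSize r (r y) = 1 := by
    have hcard : (A.card : ℚ) = levelSize r (r z) := rfl
    rw [Finset.sum_congr rfl fun y hy => by rw [(Finset.mem_filter.1 hy).2], Finset.sum_const,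
      nsmul_eq_mul, hcard, mul_one_div_cancel (levelSize_apply_pos r z).ne']
  have hanti : IsAntichain (· ≤ ·) ((insert x A : Finset P) : Set P) := by
    rw [Finset.coe_insert, isAntichain_insert]
    have hA_rank {y : P} (hy : y ∈ (A : Set P)) : r y = r z := (Finset.mem_filter.1 hy).2
    refine ⟨(isAntichain_fiber_of_strictMono hr (r z)).subset fun y hy => hA_rank hy,
      fun y hy _ => ⟨?_, ?_⟩⟩
    · exact fun hxy => hne y hxy (hA_rank hy)
    · exact fun hyx => (hr.monotone hyx).not_gt (hA_rank hy ▸ hxz)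
  have hsum := posetLYM_iff.1 hLYM _ hanti
  rw [Finset.sum_insert hxA, hlevel] at hsum
  have hpos := one_div_pos.2 (levelSize_apply_pos r x)
  linarith

theorem PosetLYM.isStronglyLogConcave_levelSize (hLYM : PosetLYM r)
    (hr : ∀ x y : P, x ⋖ y → r y = r x + 1) (hlc : PosetLogConcave r) :
    IsStronglyLogConcave (levelSize r) := by
  refine isStronglyLogConcave_of_mul_le_sq (levelSize_nonneg r) (fun i => ?_)
    fun i j k hij hjk hi hk => ?_
  · unfold levelSize
    exact_mod_cast hlc i
  · obtain ⟨x, rfl⟩ := levelSize_pos_iff.1 hi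
    obtain ⟨z, rfl⟩ := levelSize_pos_iff.1 hk
    rcases (hij.trans hjk).eq_or_lt with heq | hlt
    · rwa [hij.antisymm (heq ▸ hjk)] at hi
    · obtain ⟨y, hxy, hy⟩ := hLYM.exists_le_rank_eq (strictMono_of_forall_covBy hr) hlt
      exact levelSize_pos_iff.2 (exists_rank_eq_of_le_of_le hr hxy hij (hy ▸ hjk))

theorem IsStronglyLogConcave.posetLogConcave (h : IsStronglyLogConcave (levelSize r)) :
    PosetLogConcave r := fun i => by
  have hle : levelSize r i * levelSize r (i + 2) ≤ levelSize r (i + 1) ^ 2 := by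
    rw [sq]
    exact h.mul_le_mul (Nat.le_succ i)
  unfold levelSize at hle
  exact_mod_cast hle

theorem PosetLYM.prod (hP : PosetLYM r) (hQ : PosetLYM s) (hr : StrictMono r) (hs : StrictMono s)
    (ha : IsStronglyLogConcave (levelSize r)) (hb : IsStronglyLogConcave (levelSize s)) :
    PosetLYM fun x : P × Q => r x.1 + s x.2 := by
  refine posetLYM_iff.2 fun A hA => ?_
  have hr_pos := levelSize_apply_pos r
  have hs_pos := levelSize_apply_pos s
  set a := levelSize r
  set b := levelSize s
  have hlevel : levelSize (fun x : P × Q => r x.1 + s x.2) = cauchyProd a b :=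
    levelSize_add_eq_cauchyProd r s
  have hab_pos (x : P) (y : Q) : 0 < cauchyProd a b (r x + s y) :=
    cauchyProd_pos ha.nonneg hb.nonneg (hr_pos x) (hs_pos y)
  set F : P → Q → ℚ := fun x y =>
    if (x, y) ∈ A then a (r x) * b (s y) / cauchyProd a b (r x + s y) else 0 with hF
  calc ∑ x ∈ A, 1 / levelSize (fun x : P × Q => r x.1 + s x.2) (r x.1 + s x.2)
      = ∑ x, ∑ y, F x y * (1 / a (r x)) * (1 / b (s y)) := by
        rw [hlevel, ← Fintype.sum_prod_type', ← Finset.univ_inter A, ← Finset.sum_ite_mem]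
        refine Finset.sum_congr rfl fun x _ => ?_
        have hr_ne := (hr_pos x.1).ne'
        have hs_ne := (hs_pos x.2).ne'
        simp only [hF, ite_mul, zero_mul]
        refine if_congr Iff.rfl ?_ rfl
        field_simp
    _ ≤ 1 := sum_sum_mul_le_of_forall_isChain_sum_le (posetLYM_iff.1 hP)
        (posetLYM_iff.1 hQ) (fun y => one_div_nonneg.2 (hs_pos y).le)
        (fun x y => ite_nonneg (div_nonneg (mul_nonneg (hr_pos x).le (hs_pos y).le)
          (hab_pos x y).le) le_rfl) fun C D hC hD => ?_
  calc ∑ x ∈ C, ∑ y ∈ D, F x y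
      = ∑ x ∈ C ×ˢ D with x ∈ A, a (r x.1) * b (s x.2) / cauchyProd a b (r x.1 + s x.2) := by
        rw [Finset.sum_filter, Finset.sum_product]
    _ ≤ 1 := ha.sum_div_cauchyProd_le_one_of_subset_product hb hr hs hr_pos hs_pos hC hD
        (hA.subset fun x hx => (Finset.mem_filter.1 hx).2) (Finset.filter_subset _ _)

end RankedPosets

/-- The product theorem of Harper and Hsieh–Kleitman: if finite ranked posets
`P` and `Q` have the LYM property and are log-concave, then so does their
Cartesian product `P × Q` (ordered componentwise, with rank the sum of ranks). -/
theorem stmt8 {P Q : Type*} [Fintype P] [PartialOrder P] [Fintype Q] [PartialOrder Q]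
    (rankP : P → ℕ) (hrankP : ∀ a b : P, a ⋖ b → rankP b = rankP a + 1)
    (rankQ : Q → ℕ) (hrankQ : ∀ a b : Q, a ⋖ b → rankQ b = rankQ a + 1)
    (hP : PosetLYM rankP ∧ PosetLogConcave rankP)
    (hQ : PosetLYM rankQ ∧ PosetLogConcave rankQ) :
    PosetLYM (fun x : P × Q => rankP x.1 + rankQ x.2)
      ∧ PosetLogConcave (fun x : P × Q => rankP x.1 + rankQ x.2) := by
  have ha := hP.1.isStronglyLogConcave_levelSize hrankP hP.2
  have hb := hQ.1.isStronglyLogConcave_levelSize hrankQ hQ.2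
  constructor
  · exact hP.1.prod hQ.1 (strictMono_of_forall_covBy hrankP) (strictMono_of_forall_covBy hrankQ)
      ha hb
  · apply IsStronglyLogConcave.posetLogConcave
    rw [levelSize_add_eq_cauchyProd]
    exact ha.cauchyProd hb
end

section
/- If a monomial Artinian K-algebra A = S/I has a unimodal Hilbert function and has a full matching at degree k for every k ≥ 0, then A has the Sperner property. -/
open MvPolynomial

/-- The minimal number of generators of an ideal. -/
noncomputable def mu {R : Type*} [CommRing R] (I : Ideal R) : ℕ :=
  sInf {k | ∃ s : Finset R, s.card = k ∧ Ideal.span (s : Set R) = I}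

/-- The graded maximal ideal `(x₁, …, xₙ)` of `K[x₁, …, xₙ]`. -/
noncomputable def mm (K : Type*) [Field K] (n : ℕ) : Ideal (MvPolynomial (Fin n) K) :=
  Ideal.span (Set.range X)

/-- `I` is `m`-full: `mI : y = I` for some `y ∈ m`. -/
def IsMFull {R : Type*} [CommRing R] (m I : Ideal R) : Prop :=
  ∃ y ∈ m, (m * I).colon (Ideal.span {y}) = I

/-- A homogeneous ideal: one containing all homogeneous components of its elements. -/
def IsHomog {K : Type*} [Field K] {n : ℕ} (I : Ideal (MvPolynomial (Fin n) K)) : Prop :=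
  ∀ f ∈ I, ∀ k : ℕ, homogeneousComponent k f ∈ I

/-- `dim_K (S/I)_k`, the dimension of the degree `k` part of `S/I`. -/
noncomputable def hdim (K : Type*) [Field K] (n : ℕ)
    (I : Ideal (MvPolynomial (Fin n) K)) (k : ℕ) : ℕ :=
  Module.finrank K (Submodule.map (Ideal.Quotient.mkₐ K I).toLinearMap
    (homogeneousSubmodule (Fin n) K k))

/-- The total degree of an exponent vector. -/
def mdeg {n : ℕ} (d : Fin n →₀ ℕ) : ℕ := d.sum fun _ e => e

/-- `M_k(S/I)`: the exponent vectors of degree `k` monomials not in `I`. -/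
def MSet (K : Type*) [Field K] {n : ℕ} (I : Ideal (MvPolynomial (Fin n) K)) (k : ℕ) :
    Set (Fin n →₀ ℕ) := {d | mdeg d = k ∧ (monomial d (1 : K)) ∉ I}

/-- `I` is a monomial ideal. -/
def IsMonomialIdeal {K : Type*} [Field K] {n : ℕ} (I : Ideal (MvPolynomial (Fin n) K)) : Prop :=
  ∀ f ∈ I, ∀ d ∈ f.support, (monomial d (1 : K)) ∈ I

/-- The LYM property of the divisibility poset of monomials outside `I`,
ranked by degree.  (Divisibility of monomials is the pointwise order `≤` on
exponent vectors.) -/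
def MLYM (K : Type*) [Field K] {n : ℕ} (I : Ideal (MvPolynomial (Fin n) K)) : Prop :=
  ∀ F : Finset (Fin n →₀ ℕ), (∀ d ∈ F, (monomial d (1 : K)) ∉ I) →
    IsAntichain (· ≤ ·) (F : Set (Fin n →₀ ℕ)) →
    ∑ d ∈ F, (1 : ℚ) / (MSet K I (mdeg d)).ncard ≤ 1

/-- The Sperner property of the Artinian algebra `S/I`:
the maximal number of generators of an ideal of `S/I` equals the maximal
value of the Hilbert function of `S/I`. -/
def SpernerAlg {K : Type*} [Field K] {n : ℕ} (I : Ideal (MvPolynomial (Fin n) K)) : Prop :=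
  sSup {m | ∃ J : Ideal (MvPolynomial (Fin n) K ⧸ I), mu J = m}
    = sSup (Set.range (hdim K n I))

/-- `S/I` has a full matching at degree `k`: a matching in the bipartite graph
on `M_{k-1}(A) × M_k(A)` given by divisibility, of the maximal possible size
`min(#M_{k-1}(A), #M_k(A))`. -/
def HasFullMatching (K : Type*) [Field K] {n : ℕ}
    (I : Ideal (MvPolynomial (Fin n) K)) (k : ℕ) : Prop :=
  ∃ M : Finset ((Fin n →₀ ℕ) × (Fin n →₀ ℕ)),
    (∀ q ∈ M, q.1 ∈ MSet K I (k - 1) ∧ q.2 ∈ MSet K I k ∧ q.1 ≤ q.2) ∧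
    (∀ q ∈ M, ∀ q' ∈ M, q ≠ q' → q.1 ≠ q'.1 ∧ q.2 ≠ q'.2) ∧
    M.card = min (MSet K I (k - 1)).ncard (MSet K I k).ncard

/-!
Let `p` be the degree at which the Hilbert function peaks. Following the matchings from level to
level towards `p` splits the monomials outside `I` into chains, each of which meets level `p`, so an
antichain of such monomials has at most `H(A, p)` elements. An ideal of `A` is generated by elements
whose leading exponents are the minimal ones among its leading exponents outside `I`; these form an
antichain, whence `μ(J) ≤ H(A, p)`. Conversely `A_k` lies in `𝔪 ^ k` and meets `𝔪 ^ (k + 1)` only in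
`0`, so `H(A, k) ≤ μ(𝔪 ^ k)`, and both maxima are equal to `H(A, p)`.
-/

section Matching

variable {α β : Type*}

/-- `s` is matched into `t` along `r`: the bipartite graph of `r` between `s` and `t` has a matching
that covers `s`. It is encoded as an injection rather than as a set of edges so that matchings of
consecutive levels compose. -/
def MatchesInto (r : α → β → Prop) (s : Set α) (t : Set β) : Prop :=
  ∃ f : s ↪ t, ∀ a : s, r a (f a)

theorem matchesInto_of_ncard_le_card {ι : Type*} {r : α → β → Prop} {s : Set α} {t : Set β}
    (hs : s.Finite) {u : ι → α} {v : ι → β} {M : Finset ι}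
    (hM : ∀ q ∈ M, u q ∈ s ∧ v q ∈ t ∧ r (u q) (v q))
    (hu : Set.InjOn u M) (hv : Set.InjOn v M) (hcard : s.ncard ≤ M.card) : MatchesInto r s t := by
  have himage : u '' M = s := by
    refine Set.eq_of_subset_of_ncard_le (Set.image_subset_iff.2 fun q hq => (hM q hq).1) ?_ hs
    rwa [hu.ncard_image, Set.ncard_coe_finset]
  have hedge : ∀ a : s, ∃ q ∈ M, u q = a := fun a => himage.ge a.2
  choose e heM hue using hedge
  refine ⟨⟨fun a : s => ⟨v (e a), (hM _ (heM a)).2.1⟩, fun a b hab => ?_⟩, fun a => ?_⟩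
  · have hee : e a = e b := hv (heM a) (heM b) (Subtype.ext_iff.1 hab)
    rw [Subtype.ext_iff, ← hue a, hee, hue b]
  · have hr := (hM _ (heM a)).2.2
    rwa [hue a] at hr

theorem exists_embeddings_of_matchesInto {r : α → α → Prop} [Std.Refl r] [IsTrans α r]
    {T : ℕ → Set α} (hT : ∀ j, MatchesInto r (T (j + 1)) (T j)) :
    ∃ φ : ∀ j, T j ↪ T 0, (∀ j (a : T j), r a (φ j a)) ∧
      ∀ i j, i ≤ j → ∀ (a : T i) (b : T j), φ i a = φ j b → r b a := by
  choose g hg using hT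
  let φ : ∀ j, T j ↪ T 0 := fun j => Nat.rec (.refl _) (fun j f => (g j).trans f) j
  have hφ : ∀ j (a : T j), r a (φ j a) := by
    intro j
    induction j with
    | zero => exact fun a => refl_of r (a : α)
    | succ j ih => exact fun a => trans_of r (hg j a) (ih (g j a))
  refine ⟨φ, hφ, fun i j hij => ?_⟩
  induction j, hij using Nat.le_induction with
  | base =>
    intro a b hab
    rw [(φ i).injective hab]
    exact refl_of r (b : α)
  | succ j _ ih => exact fun a b hab => trans_of r (hg j b) (ih a (g j b) hab)

/-- The fibres of `φ` are the chains obtained by following the matchings from level to level. -/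
theorem exists_map_iUnion_of_matchesInto {r : α → α → Prop} [Std.Refl r] [IsTrans α r]
    {T : ℕ → Set α} (hT : ∀ j, MatchesInto r (T (j + 1)) (T j)) :
    ∃ φ : (⋃ j, T j) → T 0, (∀ a : ⋃ j, T j, r a (φ a)) ∧
      ∀ a b : ⋃ j, T j, φ a = φ b → r a b ∨ r b a := by
  obtain ⟨φ, hφ, hchain⟩ := exists_embeddings_of_matchesInto hT
  choose level hlevel using fun a : ⋃ j, T j => Set.mem_iUnion.1 a.2
  refine ⟨fun a => φ (level a) ⟨a, hlevel a⟩, fun a => hφ _ ⟨a, hlevel a⟩, fun a b hab => ?_⟩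
  rcases le_total (level a) (level b) with h | h
  · exact .inr (hchain _ _ h _ _ hab)
  · exact .inl (hchain _ _ h _ _ hab.symm)

theorem encard_le_of_isAntichain_of_matchesInto [Preorder α] {S : ℕ → Set α} {p : ℕ}
    (hup : ∀ k < p, MatchesInto (· ≤ ·) (S k) (S (k + 1)))
    (hdown : ∀ k, p ≤ k → MatchesInto (· ≥ ·) (S (k + 1)) (S k))
    {F : Set α} (hF : F ⊆ ⋃ k, S k) (hanti : IsAntichain (· ≤ ·) F) :
    F.encard ≤ (S p).encard := by
  classical
  have hbelow : ∀ j, MatchesInto (· ≤ ·) (S (p - (j + 1))) (S (p - j)) := by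
    intro j
    rcases lt_or_ge j p with hj | hj
    · simpa only [show p - (j + 1) + 1 = p - j by omega] using hup (p - (j + 1)) (by omega)
    · rw [show p - (j + 1) = p - j by omega]
      exact ⟨.refl _, fun a => le_rfl⟩
  obtain ⟨φ, hφ, hφ_chain⟩ := exists_map_iUnion_of_matchesInto (T := fun j => S (p - j)) hbelow
  obtain ⟨ψ, hψ, hψ_chain⟩ := exists_map_iUnion_of_matchesInto (T := fun j => S (p + j))
    fun j => hdown (p + j) (by omega)
  have habove : ∀ a ∈ F, a ∉ ⋃ j, S (p - j) → a ∈ ⋃ j, S (p + j) := by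
    intro a ha hna
    obtain ⟨k, hk⟩ := Set.mem_iUnion.1 (hF ha)
    rcases le_total k p with hkp | hkp
    · exact absurd (Set.mem_iUnion.2 ⟨p - k, by rwa [Nat.sub_sub_self hkp]⟩) hna
    · exact Set.mem_iUnion.2 ⟨k - p, by rwa [Nat.add_sub_cancel' hkp]⟩
  let χ : F → S p := fun a =>
    if ha : (a : α) ∈ ⋃ j, S (p - j) then φ ⟨a, ha⟩ else ψ ⟨a, habove a a.2 ha⟩
  have hχ_chain : ∀ a b, χ a = χ b → (a : α) ≤ b ∨ (b : α) ≤ a := by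
    intro a b hab
    simp only [χ] at hab
    split_ifs at hab with ha hb hb
    · exact hφ_chain _ _ hab
    · exact .inl ((hφ _).trans ((congrArg Subtype.val hab).le.trans (hψ _)))
    · exact .inr ((hφ _).trans ((congrArg Subtype.val hab).ge.trans (hψ _)))
    · exact (hψ_chain _ _ hab).symm
  have hχ_inj : Function.Injective χ := fun a b hab => Subtype.ext <|
    (hχ_chain a b hab).elim (hanti.eq a.2 b.2) (hanti.eq' a.2 b.2)
  exact Function.Embedding.encard_le ⟨χ, hχ_inj⟩

end Matching

section NumberOfGenerators

variable {A : Type*} [CommRing A]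

theorem mu_span_le_ncard {s : Set A} (hs : s.Finite) : mu (Ideal.span s) ≤ s.ncard :=
  Nat.sInf_le ⟨hs.toFinset, (Set.ncard_eq_toFinset_card s hs).symm, by rw [hs.coe_toFinset]⟩

theorem exists_finset_card_eq_mu {J : Ideal A} (hJ : J.FG) :
    ∃ s : Finset A, s.card = mu J ∧ Ideal.span (s : Set A) = J := by
  obtain ⟨s, hs⟩ := hJ
  exact Nat.sInf_mem (s := {k | ∃ s : Finset A, s.card = k ∧ Ideal.span (s : Set A) = J})
    ⟨s.card, s, rfl, hs⟩

theorem finrank_map_of_disjoint_ker {R M N : Type*} [Ring R] [AddCommGroup M] [AddCommGroup N]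
    [Module R M] [Module R N] {f : M →ₗ[R] N} {W : Submodule R M} (h : Disjoint W f.ker) :
    Module.finrank R (W.map f) = Module.finrank R W := by
  rw [← LinearMap.range_domRestrict,
    LinearMap.finrank_range_of_inj (LinearMap.injective_domRestrict_iff.2 h)]

theorem map_span_le_span_image_of_mul_le_ker {K V : Type*} [CommRing K] [Algebra K A]
    [AddCommGroup V] [Module K V] {𝔪 : Ideal A} (h𝔪 : ∀ a, ∃ c : K, a - algebraMap K A c ∈ 𝔪)
    {π : A →ₗ[K] V} {s : Set A} (hπ : (𝔪 * Ideal.span s).restrictScalars K ≤ π.ker) :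
    ((Ideal.span s).restrictScalars K).map π ≤ Submodule.span K (π '' s) := by
  rintro _ ⟨x, hx, rfl⟩
  rw [SetLike.mem_coe, Submodule.restrictScalars_mem] at hx
  induction hx using Submodule.span_induction with
  | mem x hx => exact Submodule.subset_span (Set.mem_image_of_mem π hx)
  | zero => exact π.map_zero ▸ zero_mem _
  | add x y _ _ hx hy => exact π.map_add x y ▸ add_mem hx hy
  | smul a x hxs hx =>
    obtain ⟨c, hc⟩ := h𝔪 a
    have hax : π (a * x - c • x) = 0 := by
      rw [Algebra.smul_def c x, ← sub_mul]
      exact hπ (Ideal.mul_mem_mul hc hxs)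
    rw [map_sub, map_smul, sub_eq_zero] at hax
    rw [smul_eq_mul, hax]
    exact Submodule.smul_mem _ c hx

theorem finrank_le_mu_of_disjoint_mul {K : Type*} [Field K] [Algebra K A] {𝔪 J : Ideal A}
    (h𝔪 : ∀ a, ∃ c : K, a - algebraMap K A c ∈ 𝔪) (hJ : J.FG) {W : Submodule K A}
    (hWJ : W ≤ J.restrictScalars K) (hW : Disjoint W ((𝔪 * J).restrictScalars K)) :
    Module.finrank K W ≤ mu J := by
  classical
  obtain ⟨s, hcard, rfl⟩ := exists_finset_card_eq_mu hJ
  let U := (𝔪 * Ideal.span (s : Set A)).restrictScalars K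
  let π := U.mkQ
  have hmap : W.map π ≤ Submodule.span K (s.image π : Set (A ⧸ U)) := by
    rw [Finset.coe_image]
    exact (Submodule.map_mono hWJ).trans (map_span_le_span_image_of_mul_le_ker h𝔪 U.ker_mkQ.ge)
  calc Module.finrank K W
      = Module.finrank K (W.map π) := (finrank_map_of_disjoint_ker (by rwa [U.ker_mkQ])).symm
    _ ≤ Module.finrank K (Submodule.span K (s.image π : Set (A ⧸ U))) := Submodule.finrank_mono hmap
    _ ≤ (s.image π).card := finrank_span_finset_le_card _
    _ ≤ mu (Ideal.span (s : Set A)) := Finset.card_image_le.trans hcard.le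

end NumberOfGenerators

section LeadingExponents

variable {σ : Type*} (m : MonomialOrder σ)

theorem span_eq_of_forall_exists_degree_le {R : Type*} [CommRing R] {J : Ideal (MvPolynomial σ R)}
    {B : Set (MvPolynomial σ R)} (hBJ : B ⊆ J) (hB : ∀ b ∈ B, IsUnit (m.leadingCoeff b))
    (hdvd : ∀ f ∈ J, f ≠ 0 → ∃ b ∈ B, m.degree b ≤ m.degree f) : Ideal.span B = J := by
  refine (Ideal.span_le.2 hBJ).antisymm fun f hf => ?_
  obtain ⟨g, r, hfr, -, hr⟩ := m.div_set hB f
  have hg : Finsupp.linearCombination (MvPolynomial σ R) (fun b : B => (b : MvPolynomial σ R)) g ∈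
      Ideal.span B := (Finsupp.mem_span_iff_linearCombination _ _ _).2 ⟨g, rfl⟩
  have hrJ : r ∈ J := by
    rw [eq_sub_of_add_eq' hfr.symm]
    exact J.sub_mem hf (Ideal.span_le.2 hBJ hg)
  have hr0 : r = 0 := by
    by_contra hne
    obtain ⟨b, hb, hle⟩ := hdvd r hrJ hne
    exact hr _ (m.degree_mem_support hne) b hb hle
  rwa [hfr, hr0, add_zero]

theorem exists_isAntichain_degree_sup_span_eq {K : Type*} [Field K]
    {I J : Ideal (MvPolynomial σ K)} (hIJ : I ≤ J) :
    ∃ B : Set (MvPolynomial σ K), Set.InjOn m.degree B ∧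
      IsAntichain (· ≤ ·) (m.degree '' B) ∧ (∀ b ∈ B, monomial (m.degree b) (1 : K) ∉ I) ∧
      I ⊔ Ideal.span B = J := by
  let L : Set (σ →₀ ℕ) := {d | monomial d (1 : K) ∉ I ∧ ∃ f ∈ J, f ≠ 0 ∧ m.degree f = d}
  choose G hGJ hG0 hGdeg using fun d : {d // Minimal (· ∈ L) d} => d.2.prop.2
  have himage : m.degree '' Set.range G = {d | Minimal (· ∈ L) d} := by
    rw [← Set.range_comp, show m.degree ∘ G = Subtype.val from funext hGdeg]
    exact Subtype.range_coe
  refine ⟨Set.range G, ?_, himage ▸ setOfPred_minimal_antichain _, ?_, ?_⟩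
  · rintro _ ⟨d, rfl⟩ _ ⟨e, rfl⟩ hde
    rw [hGdeg, hGdeg] at hde
    rw [Subtype.ext hde]
  · rintro _ ⟨d, rfl⟩
    rw [hGdeg]
    exact d.2.prop.1
  have hdeg : ∀ d, m.degree (monomial d (1 : K)) = d := fun d => by
    classical rw [m.degree_monomial, if_neg one_ne_zero]
  have hspan : Ideal.span (I \ {0} ∪ Set.range G) = J := by
    apply span_eq_of_forall_exists_degree_le m
    · exact Set.union_subset (Set.sdiff_subset.trans hIJ) (Set.range_subset_iff.2 hGJ)
    · rintro b (hb | ⟨d, rfl⟩)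
      · exact (m.leadingCoeff_ne_zero_iff.2 hb.2).isUnit
      · exact (m.leadingCoeff_ne_zero_iff.2 (hG0 d)).isUnit
    · intro f hf hf0
      by_cases hI : monomial (m.degree f) (1 : K) ∈ I
      · exact ⟨_, .inl ⟨hI, by simp⟩, (hdeg _).le⟩
      · obtain ⟨d, hdf, hd⟩ :=
          exists_minimal_le_of_wellFoundedLT (· ∈ L) (m.degree f) ⟨hI, f, hf, hf0, rfl⟩
        exact ⟨G ⟨d, hd⟩, .inr ⟨_, rfl⟩, (hGdeg _).trans_le hdf⟩
  rw [← hspan, Ideal.span_union, Ideal.span_sdiff_singleton_zero, Ideal.span_eq]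

theorem mu_le_of_forall_isAntichain [LinearOrder σ] [WellFoundedGT σ] {K : Type*} [Field K]
    {I : Ideal (MvPolynomial σ K)} {w : ℕ}
    (hw : ∀ F : Set (σ →₀ ℕ), (∀ d ∈ F, monomial d (1 : K) ∉ I) → IsAntichain (· ≤ ·) F →
      F.encard ≤ w)
    (J : Ideal (MvPolynomial σ K ⧸ I)) : mu J ≤ w := by
  have hIJ : I ≤ J.comap (Ideal.Quotient.mk I) := by
    rw [← Ideal.map_le_iff_le_comap, Ideal.map_quotient_self]
    exact bot_le
  obtain ⟨B, hinj, hanti, hstd, hB⟩ := exists_isAntichain_degree_sup_span_eq MonomialOrder.lex hIJ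
  have hJ : J = Ideal.span (Ideal.Quotient.mk I '' B) := by
    rw [← Ideal.map_span, ← Ideal.map_comap_of_surjective _ Ideal.Quotient.mk_surjective J, ← hB,
      Ideal.map_sup, Ideal.map_quotient_self, bot_sup_eq]
  have hcard : B.encard ≤ w :=
    hinj.encard_image ▸ hw _ (Set.forall_mem_image.2 hstd) hanti
  obtain ⟨hfin, hncard⟩ := Set.encard_le_coe_iff_finite_ncard_le.1 hcard
  rw [hJ]
  exact (mu_span_le_ncard (hfin.image _)).trans ((Set.ncard_image_le hfin).trans hncard)

end LeadingExponents

section HilbertFunction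

variable {K : Type*} [Field K] {n : ℕ} {I : Ideal (MvPolynomial (Fin n) K)}

theorem IsMonomialIdeal.mem_iff (hI : IsMonomialIdeal I) {f : MvPolynomial (Fin n) K} :
    f ∈ I ↔ ∀ d ∈ f.support, monomial d (1 : K) ∈ I := by
  refine ⟨hI f, fun h => ?_⟩
  rw [f.as_sum]
  refine I.sum_mem fun d hd => ?_
  rw [← mul_one (coeff d f), ← C_mul_monomial]
  exact I.mul_mem_left _ (h d hd)

theorem IsMonomialIdeal.isHomog (hI : IsMonomialIdeal I) : IsHomog I := by
  intro f hf k
  refine hI.mem_iff.2 fun d hd => hI f hf d ?_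
  rw [mem_support_iff, coeff_homogeneousComponent] at hd
  exact mem_support_iff.2 (ite_ne_right_iff.1 hd).2

theorem finite_MSet (I : Ideal (MvPolynomial (Fin n) K)) (k : ℕ) : (MSet K I k).Finite :=
  (Finsupp.finite_of_degree_le k).subset fun _ hd => hd.1.le

theorem map_mk_restrictSupport_MSet (I : Ideal (MvPolynomial (Fin n) K)) (k : ℕ) :
    (restrictSupport K (MSet K I k)).map (Ideal.Quotient.mkₐ K I).toLinearMap =
      (homogeneousSubmodule (Fin n) K k).map (Ideal.Quotient.mkₐ K I).toLinearMap := by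
  have hhom : homogeneousSubmodule (Fin n) K k = restrictSupport K {d | d.degree = k} :=
    homogeneousSubmodule_eq_finsupp_supported _ _ _
  rw [hhom]
  refine (Submodule.map_mono (restrictSupport_mono K fun _ hd => hd.1)).antisymm ?_
  rw [restrictSupport_eq_span, Submodule.map_span_le]
  rintro _ ⟨d, hd, rfl⟩
  by_cases hdI : monomial d (1 : K) ∈ I
  · have hzero : (Ideal.Quotient.mkₐ K I).toLinearMap (monomial d 1) = 0 :=
      Ideal.Quotient.eq_zero_iff_mem.2 hdI
    rw [hzero]
    exact zero_mem _
  · exact Submodule.mem_map_of_mem (monomial_mem_restrictSupport K |>.2 (.inl ⟨hd, hdI⟩))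

theorem IsMonomialIdeal.hdim_eq_ncard (hI : IsMonomialIdeal I) (k : ℕ) :
    hdim K n I k = (MSet K I k).ncard := by
  have hdisj : Disjoint (restrictSupport K (MSet K I k))
      (Ideal.Quotient.mkₐ K I).toLinearMap.ker := by
    refine Submodule.disjoint_def.2 fun f hf hfI => support_eq_empty.1 ?_
    refine Finset.eq_empty_of_forall_notMem fun d hd => ?_
    exact (hf hd).2 (hI f (Ideal.Quotient.eq_zero_iff_mem.1 hfI) d hd)
  rw [hdim, ← map_mk_restrictSupport_MSet, finrank_map_of_disjoint_ker hdisj,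
    Module.finrank_eq_nat_card_basis (basisRestrictSupport K _), Nat.card_coe_set_eq]

theorem exists_sub_algebraMap_mem_map_idealOfVars (a : MvPolynomial (Fin n) K ⧸ I) :
    ∃ c : K, a - algebraMap K _ c ∈ (idealOfVars (Fin n) K).map (Ideal.Quotient.mk I) := by
  obtain ⟨f, rfl⟩ := Ideal.Quotient.mk_surjective a
  refine ⟨constantCoeff f, ?_⟩
  rw [← Ideal.Quotient.mk_algebraMap, ← map_sub]
  apply Ideal.mem_map_of_mem
  rw [← pow_one (idealOfVars (Fin n) K), mem_pow_idealOfVars_iff']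
  intro d hd
  rw [(Finsupp.degree_eq_zero_iff d).1 (by omega), coeff_sub,
    algebraMap_eq, coeff_zero_C, constantCoeff_eq, sub_self]

theorem IsHomog.hdim_le_mu_map_pow_idealOfVars (hI : IsHomog I) (k : ℕ) :
    hdim K n I k ≤ mu ((idealOfVars (Fin n) K ^ k).map (Ideal.Quotient.mk I)) := by
  refine finrank_le_mu_of_disjoint_mul (K := K) exists_sub_algebraMap_mem_map_idealOfVars
    (IsNoetherian.noetherian _) ?_ ?_
  · rintro _ ⟨f, hf, rfl⟩
    refine Ideal.mem_map_of_mem _ ((mem_pow_idealOfVars_iff' k f).2 fun d hd => ?_)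
    exact IsHomogeneous.coeff_eq_zero hf hd.ne
  · rw [← Ideal.map_mul, ← pow_succ', Submodule.disjoint_def]
    rintro _ ⟨f, hf, rfl⟩ hmem
    obtain ⟨g, hg, hgf⟩ :=
      (Ideal.mem_map_iff_of_surjective _ Ideal.Quotient.mk_surjective).1 hmem
    have hg0 : homogeneousComponent k g = 0 := by
      ext d
      rw [coeff_homogeneousComponent, coeff_zero, ite_eq_right_iff]
      exact fun hd => (mem_pow_idealOfVars_iff' _ g).1 hg d (by omega)
    have hfg := hI _ (Ideal.Quotient.eq.1 hgf) k
    rw [map_sub, hg0, homogeneousComponent_of_mem hf, if_pos rfl, zero_sub, neg_mem_iff] at hfg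
    exact Ideal.Quotient.eq_zero_iff_mem.2 hfg

end HilbertFunction

section FullMatching

variable {K : Type*} [Field K] {n k : ℕ} {I : Ideal (MvPolynomial (Fin n) K)}

theorem HasFullMatching.matchesInto_le (h : HasFullMatching K I (k + 1))
    (hle : (MSet K I k).ncard ≤ (MSet K I (k + 1)).ncard) :
    MatchesInto (· ≤ ·) (MSet K I k) (MSet K I (k + 1)) := by
  obtain ⟨M, hM, hne, hcard⟩ := h
  exact matchesInto_of_ncard_le_card (finite_MSet I k) hM
    (fun q hq q' hq' heq => by_contra fun hqq' => (hne q hq q' hq' hqq').1 heq)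
    (fun q hq q' hq' heq => by_contra fun hqq' => (hne q hq q' hq' hqq').2 heq)
    (hcard.trans (min_eq_left hle)).ge

theorem HasFullMatching.matchesInto_ge (h : HasFullMatching K I (k + 1))
    (hle : (MSet K I (k + 1)).ncard ≤ (MSet K I k).ncard) :
    MatchesInto (· ≥ ·) (MSet K I (k + 1)) (MSet K I k) := by
  obtain ⟨M, hM, hne, hcard⟩ := h
  exact matchesInto_of_ncard_le_card (finite_MSet I (k + 1))
    (fun q hq => ⟨(hM q hq).2.1, (hM q hq).1, (hM q hq).2.2⟩)
    (fun q hq q' hq' heq => by_contra fun hqq' => (hne q hq q' hq' hqq').2 heq)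
    (fun q hq q' hq' heq => by_contra fun hqq' => (hne q hq q' hq' hqq').1 heq)
    (hcard.trans (min_eq_right hle)).ge

end FullMatching

theorem stmt10_general {K : Type*} [Field K] {n : ℕ} (I : Ideal (MvPolynomial (Fin n) K))
    (hmon : IsMonomialIdeal I)
    (hunimodal : ∃ p : ℕ, (∀ k : ℕ, k < p → hdim K n I k ≤ hdim K n I (k + 1)) ∧
      (∀ k : ℕ, p ≤ k → hdim K n I (k + 1) ≤ hdim K n I k))
    (hmatch : ∀ k : ℕ, 1 ≤ k → HasFullMatching K I k) :
    SpernerAlg I := by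
  obtain ⟨p, hinc, hdec⟩ := hunimodal
  have hanti : ∀ F : Set (Fin n →₀ ℕ), (∀ d ∈ F, monomial d (1 : K) ∉ I) →
      IsAntichain (· ≤ ·) F → F.encard ≤ hdim K n I p := by
    intro F hF hF_anti
    rw [hmon.hdim_eq_ncard, (finite_MSet I p).cast_ncard_eq]
    simp only [hmon.hdim_eq_ncard] at hinc hdec
    exact encard_le_of_isAntichain_of_matchesInto
      (fun k hk => (hmatch (k + 1) (by omega)).matchesInto_le (hinc k hk))
      (fun k hk => (hmatch (k + 1) (by omega)).matchesInto_ge (hdec k hk))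
      (fun d hd => Set.mem_iUnion.2 ⟨mdeg d, rfl, hF d hd⟩) hF_anti
  have hmu_le := mu_le_of_forall_isAntichain hanti
  have hle_mu := hmon.isHomog.hdim_le_mu_map_pow_idealOfVars
  have hmu : IsGreatest {m | ∃ J : Ideal (MvPolynomial (Fin n) K ⧸ I), mu J = m} (hdim K n I p) :=
    ⟨⟨_, (hmu_le _).antisymm (hle_mu p)⟩, by rintro _ ⟨J, rfl⟩; exact hmu_le J⟩
  have hhdim : IsGreatest (Set.range (hdim K n I)) (hdim K n I p) :=
    ⟨⟨p, rfl⟩, Set.forall_mem_range.2 fun k => (hle_mu k).trans (hmu_le _)⟩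
  exact hmu.csSup_eq.trans hhdim.csSup_eq.symm

/-- If a monomial Artinian algebra `A = S/I` has a unimodal Hilbert function and
has a full matching at every degree, then `A` has the Sperner property. -/
theorem stmt10 {K : Type*} [Field K] {n : ℕ} (I : Ideal (MvPolynomial (Fin n) K))
    (hmon : IsMonomialIdeal I) [FiniteDimensional K (MvPolynomial (Fin n) K ⧸ I)]
    (hunimodal : ∃ p : ℕ, (∀ k : ℕ, k < p → hdim K n I k ≤ hdim K n I (k + 1)) ∧
      (∀ k : ℕ, p ≤ k → hdim K n I (k + 1) ≤ hdim K n I k))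
    (hmatch : ∀ k : ℕ, 1 ≤ k → HasFullMatching K I k) :
    SpernerAlg I :=
  stmt10_general I hmon hunimodal hmatch
end

section
/- Let S = K[x₁,...,x₅] and I = (x₁⁵, x₂⁵, x₃⁵, x₄⁵, x₅⁵, x₁x₂x₃x₄x₅). Then the multiplication map ×(x₁+x₂+x₃+x₄+x₅) : (S/I)_k → (S/I)_{k+1} is neither injective nor surjective for k = 8 and k = 9. -/
open MvPolynomial

/-!
Let `I = (xᵢ ^ d, ∏ xᵢ)` in `n` variables and `ℓ = ∑ xᵢ`.

*Surjectivity.* For `n ≤ d`, pairing with the Vandermonde determinant `det (xᵢ ^ j)` is a functional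
that kills `I`, because each monomial of the determinant has exponents `0, …, n - 1` in some order.
It also kills the multiples of `ℓ`: raising one exponent multiplies one row of a matrix `A` by the
shift matrix `N`, and the sum over all rows of the resulting determinants is
`det A * trace N = 0`. Hence no divisor of `x₁ ^ 0 * x₂ ^ 1 * ⋯ * xₙ ^ (n - 1)` lies in `I + (ℓ)`.

*Injectivity.* Multiplication by `ℓ` preserves symmetric polynomials, and modulo `I` these have rank
in degree `k` equal to the number of partitions of `k` in an `(n - 1) × (d - 1)` box. For
`n = d = 5` this number drops from 8 to 7 between degrees 8 and 9, so there is a kernel element of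
degree 8. No nonzero element of degree below `(n - 1) * (d - 1) = 16` is killed by all the
variables, so some variable times this element is a nonzero kernel element of degree 9.
-/

open Finset

section Ideal

variable {σ R : Type*}

/-- The monomial ideal generated by the `d`-th powers of the variables and by their product. -/
noncomputable def powProdIdeal (σ R : Type*) [Fintype σ] [CommSemiring R] (d : ℕ) :
    Ideal (MvPolynomial σ R) :=
  Ideal.span (insert (∏ i, X i) (Set.range fun i => X i ^ d))

/-- The exponents of the monomials outside `powProdIdeal σ R d`; these monomials form a basis of the
quotient ring. -/
def IsStandard (d : ℕ) (m : σ →₀ ℕ) : Prop :=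
  (∀ i, m i < d) ∧ ∃ i, m i = 0

instance [Fintype σ] (d : ℕ) : DecidablePred (IsStandard (σ := σ) d) :=
  fun _ => inferInstanceAs (Decidable (_ ∧ _))

theorem IsStandard.mono {d e : ℕ} (hde : d ≤ e) {m : σ →₀ ℕ} (hm : IsStandard d m) :
    IsStandard e m :=
  ⟨fun i => (hm.1 i).trans_le hde, hm.2⟩

theorem isStandard_mapDomain {d : ℕ} {m : σ →₀ ℕ} (e : Equiv.Perm σ) :
    IsStandard d (m.mapDomain e) ↔ IsStandard d m := by
  simp only [IsStandard, Finsupp.mapDomain_equiv_apply]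
  exact and_congr (e.symm.forall_congr_right (q := fun i => m i < d))
    (e.symm.exists_congr_right (q := fun i => m i = 0))

theorem powProdIdeal_eq_span_monomial [Fintype σ] [CommSemiring R] (d : ℕ) :
    powProdIdeal σ R d = Ideal.span ((fun m => monomial m (1 : R)) ''
      insert (∑ i, Finsupp.single i 1) (Set.range fun i => Finsupp.single i d)) := by
  rw [powProdIdeal, Set.image_insert_eq, ← Set.range_comp, monomial_sum_one]
  simp only [Function.comp_def, X_pow_eq_monomial]
  rfl

theorem mem_powProdIdeal_iff [Fintype σ] [CommSemiring R] {d : ℕ} {f : MvPolynomial σ R} :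
    f ∈ powProdIdeal σ R d ↔ ∀ m, IsStandard d m → coeff m f = 0 := by
  classical
  have divisible_iff (m : σ →₀ ℕ) :
      (∃ s ∈ insert (∑ i, Finsupp.single i 1) (Set.range fun i : σ => Finsupp.single i d), s ≤ m) ↔
        ¬ IsStandard d m := by
    have prod_le : ∑ i, Finsupp.single i 1 ≤ m ↔ ∀ i, m i ≠ 0 := by
      simp [Finsupp.le_def, Finsupp.finsetSum_apply, Finsupp.single_apply, Nat.one_le_iff_ne_zero]
    simp only [Set.exists_mem_insert, Set.exists_range_iff, prod_le, Finsupp.single_le_iff,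
      IsStandard, not_and_or, not_forall, not_exists, not_lt, or_comm]
  rw [powProdIdeal_eq_span_monomial, mem_ideal_span_monomial_image]
  refine forall_congr' fun m => ?_
  rw [divisible_iff, mem_support_iff, not_imp_not]

theorem exists_isStandard_single_add [Fintype σ] {d : ℕ} {m : σ →₀ ℕ}
    (hm : IsStandard d m) (hdeg : m.degree < (Fintype.card σ - 1) * (d - 1)) :
    ∃ i, IsStandard d (Finsupp.single i 1 + m) := by
  classical
  obtain ⟨hlt, j, hj⟩ := hm
  obtain ⟨i, hi, hid⟩ : ∃ i ∈ univ.erase j, m i < d - 1 := by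
    refine exists_lt_of_sum_lt ?_
    calc ∑ i ∈ univ.erase j, m i ≤ m.degree := by
          rw [m.degree_eq_sum]
          exact sum_le_sum_of_subset (erase_subset j univ)
      _ < ∑ _i ∈ univ.erase j, (d - 1) := by
          rwa [sum_const, card_erase_of_mem (mem_univ j), smul_eq_mul, card_univ]
  have hij : i ≠ j := ne_of_mem_erase hi
  refine ⟨i, fun l => ?_, j, by simp [hij, hj]⟩
  rw [Finsupp.add_apply, Finsupp.single_apply]
  split_ifs with hil
  · subst hil; omega
  · simpa using hlt l

theorem exists_X_mul_notMem_powProdIdeal [Fintype σ] [CommSemiring R] {d k : ℕ}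
    {f : MvPolynomial σ R} (hf : f.IsHomogeneous k) (hk : k < (Fintype.card σ - 1) * (d - 1))
    (hfI : f ∉ powProdIdeal σ R d) : ∃ i, X i * f ∉ powProdIdeal σ R d := by
  obtain ⟨m, hm, hmf⟩ : ∃ m, IsStandard d m ∧ coeff m f ≠ 0 := by
    simpa only [mem_powProdIdeal_iff, not_forall, exists_prop] using hfI
  have hdeg : m.degree = k := by_contra fun h => hmf (hf.coeff_eq_zero h)
  obtain ⟨i, hi⟩ := exists_isStandard_single_add hm (hdeg ▸ hk)
  exact ⟨i, fun h => hmf (by simpa only [coeff_X_mul] using mem_powProdIdeal_iff.1 h _ hi)⟩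

theorem exists_mul_mem_powProdIdeal_succ [Fintype σ] [CommSemiring R] {d k : ℕ}
    {g : MvPolynomial σ R} (hk : k < (Fintype.card σ - 1) * (d - 1))
    (h : ∃ f : MvPolynomial σ R, f.IsHomogeneous k ∧ f ∉ powProdIdeal σ R d ∧
      g * f ∈ powProdIdeal σ R d) :
    ∃ f : MvPolynomial σ R, f.IsHomogeneous (k + 1) ∧ f ∉ powProdIdeal σ R d ∧
      g * f ∈ powProdIdeal σ R d := by
  obtain ⟨f, hf, hfI, hgf⟩ := h
  obtain ⟨i, hi⟩ := exists_X_mul_notMem_powProdIdeal hf hk hfI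
  exact ⟨X i * f, add_comm 1 k ▸ (isHomogeneous_X R i).mul hf, hi,
    mul_left_comm g (X i) f ▸ Ideal.mul_mem_left _ _ hgf⟩

end Ideal

section Symmetric

variable {R : Type*} {n : ℕ}

/-- The exponents of degree `k` of the monomials outside `powProdIdeal (Fin n) R d`. -/
def standardExponents (n d k : ℕ) : Finset (Fin n →₀ ℕ) :=
  {m ∈ univ.finsuppAntidiag k | IsStandard d m}

theorem mem_standardExponents {d k : ℕ} {m : Fin n →₀ ℕ} :
    m ∈ standardExponents n d k ↔ m.degree = k ∧ IsStandard d m := by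
  simp [standardExponents, Finsupp.degree_eq_sum]

/-- The partitions of `k` inside an `(n - 1) × (d - 1)` box, written as nondecreasing exponents
with first entry `0`. They index the orbits of `standardExponents n d k` under permutations.
Monotonicity is spelled out so that membership is decidable by evaluation. -/
def boxPartitions (n d k : ℕ) : Finset (Fin n →₀ ℕ) :=
  {m ∈ standardExponents n d k | ∀ i j, i ≤ j → m i ≤ m j}

/-- The nondecreasing rearrangement of an exponent. -/
noncomputable def sortExponent (m : Fin n →₀ ℕ) : Fin n →₀ ℕ :=
  m.mapDomain (Tuple.sort m).symm

theorem coe_sortExponent (m : Fin n →₀ ℕ) : ⇑(sortExponent m) = m ∘ Tuple.sort m := by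
  ext i
  simp [sortExponent, Finsupp.mapDomain_equiv_apply]

theorem sortExponent_mapDomain (m : Fin n →₀ ℕ) (e : Equiv.Perm (Fin n)) :
    sortExponent (m.mapDomain e) = sortExponent m := by
  have he : ⇑(m.mapDomain e) = m ∘ e.symm := funext (Finsupp.mapDomain_equiv_apply m)
  apply DFunLike.coe_injective
  rw [coe_sortExponent, coe_sortExponent, he, Tuple.comp_perm_comp_sort_eq_comp_sort]

theorem sortExponent_eq_self {m : Fin n →₀ ℕ} (hm : Monotone m) : sortExponent m = m := by
  apply DFunLike.coe_injective
  rw [coe_sortExponent, Tuple.sort_eq_refl_iff_monotone.2 hm, Equiv.coe_refl, Function.comp_id]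

theorem sortExponent_mem_boxPartitions {d k : ℕ} {m : Fin n →₀ ℕ}
    (hm : m ∈ standardExponents n d k) : sortExponent m ∈ boxPartitions n d k := by
  obtain ⟨hdeg, hstd⟩ := mem_standardExponents.1 hm
  refine mem_filter.2
    ⟨mem_standardExponents.2 ⟨?_, (isStandard_mapDomain _).2 hstd⟩, fun i j hij => ?_⟩
  · rw [sortExponent, Finsupp.degree_mapDomain, hdeg]
  · rw [coe_sortExponent]
    exact Tuple.monotone_sort m hij

theorem coeff_sortExponent [CommSemiring R] {g : MvPolynomial (Fin n) R} (hg : g.IsSymmetric)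
    (m : Fin n →₀ ℕ) : coeff (sortExponent m) g = coeff m g := by
  nth_rw 1 [← hg (Tuple.sort m).symm]
  exact coeff_rename_mapDomain _ (Equiv.injective _) g m

theorem mem_powProdIdeal_of_isSymmetric [CommSemiring R] {d k : ℕ} {g : MvPolynomial (Fin n) R}
    (hsymm : g.IsSymmetric) (hhom : g.IsHomogeneous k)
    (hcoeff : ∀ p ∈ boxPartitions n d k, coeff p g = 0) : g ∈ powProdIdeal (Fin n) R d := by
  refine mem_powProdIdeal_iff.2 fun m hm => ?_
  by_cases hdeg : m.degree = k
  · rw [← coeff_sortExponent hsymm]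
    exact hcoeff _ (sortExponent_mem_boxPartitions (mem_standardExponents.2 ⟨hdeg, hm⟩))
  · exact hhom.coeff_eq_zero hdeg

/-- The symmetric polynomial supported on `standardExponents n d k` whose coefficient on the orbit
of a box partition `p` is `a p`. -/
noncomputable def orbitPolynomial [CommSemiring R] (d k : ℕ) :
    ((Fin n →₀ ℕ) → R) →ₗ[R] MvPolynomial (Fin n) R :=
  ∑ m ∈ standardExponents n d k, monomial m ∘ₗ LinearMap.proj (sortExponent m)

theorem coeff_orbitPolynomial [CommSemiring R] (d k : ℕ) (a : (Fin n →₀ ℕ) → R)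
    (m : Fin n →₀ ℕ) : coeff m (orbitPolynomial d k a) =
      if m ∈ standardExponents n d k then a (sortExponent m) else 0 := by
  simp [orbitPolynomial, LinearMap.sum_apply, coeff_sum, coeff_monomial]

theorem isHomogeneous_orbitPolynomial [CommSemiring R] (d k : ℕ) (a : (Fin n →₀ ℕ) → R) :
    (orbitPolynomial d k a).IsHomogeneous k := by
  rw [orbitPolynomial, LinearMap.sum_apply]
  exact IsHomogeneous.sum _ _ _ fun m hm =>
    isHomogeneous_monomial _ (mem_standardExponents.1 hm).1

theorem mapDomain_mem_standardExponents {d k : ℕ} {m : Fin n →₀ ℕ} (e : Equiv.Perm (Fin n)) :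
    m.mapDomain e ∈ standardExponents n d k ↔ m ∈ standardExponents n d k := by
  rw [mem_standardExponents, mem_standardExponents, Finsupp.degree_mapDomain,
    isStandard_mapDomain]

theorem isSymmetric_orbitPolynomial [CommSemiring R] (d k : ℕ) (a : (Fin n →₀ ℕ) → R) :
    (orbitPolynomial d k a).IsSymmetric := by
  intro e
  ext m
  obtain ⟨m, rfl⟩ := (Finsupp.mapDomain_surjective e.surjective) m
  rw [coeff_rename_mapDomain _ e.injective, coeff_orbitPolynomial, coeff_orbitPolynomial,
    sortExponent_mapDomain]
  simp only [mapDomain_mem_standardExponents]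

theorem orbitPolynomial_notMem_powProdIdeal [CommSemiring R] {d k : ℕ} {a : (Fin n →₀ ℕ) → R}
    {p : Fin n →₀ ℕ} (hp : p ∈ boxPartitions n d k) (hap : a p ≠ 0) :
    orbitPolynomial d k a ∉ powProdIdeal (Fin n) R d := by
  obtain ⟨hpstd, hmono⟩ := mem_filter.1 hp
  intro h
  have hcoeff := mem_powProdIdeal_iff.1 h p (mem_standardExponents.1 hpstd).2
  rw [coeff_orbitPolynomial, if_pos hpstd, sortExponent_eq_self hmono] at hcoeff
  exact hap hcoeff

theorem exists_ne_zero_map_eq_zero_of_card_lt [Ring R] [StrongRankCondition R] {α β : Type*}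
    [Fintype α] [Fintype β] (h : Fintype.card β < Fintype.card α) (T : (α → R) →ₗ[R] β → R) :
    ∃ a ≠ 0, T a = 0 := by
  have hT : ¬ Function.Injective T := fun hT => h.not_ge (card_le_of_injective R T hT)
  rw [injective_iff_map_eq_zero] at hT
  push Not at hT
  simpa only [and_comm] using hT

theorem exists_sum_X_mul_mem_of_card_boxPartitions_lt [CommRing R] [Nontrivial R] {d k : ℕ}
    (h : #(boxPartitions n d (k + 1)) < #(boxPartitions n d k)) :
    ∃ f : MvPolynomial (Fin n) R, f.IsHomogeneous k ∧ f ∉ powProdIdeal (Fin n) R d ∧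
      (∑ i, X i) * f ∈ powProdIdeal (Fin n) R d := by
  let extend : (boxPartitions n d k → R) →ₗ[R] (Fin n →₀ ℕ) → R :=
    Function.ExtendByZero.linearMap R Subtype.val
  let T : (boxPartitions n d k → R) →ₗ[R] boxPartitions n d (k + 1) → R :=
    LinearMap.pi fun p => lcoeff R p.1 ∘ₗ LinearMap.mulLeft R (∑ i, X i) ∘ₗ
      orbitPolynomial d k ∘ₗ extend
  obtain ⟨a, ha, hTa⟩ := exists_ne_zero_map_eq_zero_of_card_lt (by simpa using h) T
  obtain ⟨p, hp⟩ := Function.ne_iff.1 ha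
  have extend_apply : extend a p = a p := Subtype.val_injective.extend_apply a 0 p
  refine ⟨orbitPolynomial d k (extend a), isHomogeneous_orbitPolynomial d k _,
    orbitPolynomial_notMem_powProdIdeal p.2 (extend_apply ▸ hp),
    mem_powProdIdeal_of_isSymmetric (k := k + 1) ?_ ?_ fun q hq => congrFun hTa ⟨q, hq⟩⟩
  · have sum_X_isSymmetric := psum_isSymmetric (Fin n) R 1
    simp only [psum, pow_one] at sum_X_isSymmetric
    exact sum_X_isSymmetric.mul (isSymmetric_orbitPolynomial d k _)
  · rw [add_comm]
    exact (IsHomogeneous.sum _ _ _ fun i _ => isHomogeneous_X R i).mul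
      (isHomogeneous_orbitPolynomial d k _)

end Symmetric

section Vandermonde

variable {R : Type*} [CommRing R] {n : ℕ}

theorem sum_det_updateRow_mul {ι : Type*} [Fintype ι] [DecidableEq ι] (A N : Matrix ι ι R) :
    ∑ i, (A.updateRow i ((A * N).row i)).det = A.det * N.trace := by
  have det_updateRow (i : ι) :
      (A.updateRow i ((A * N).row i)).det = (A * N * A.adjugate) i i := by
    rw [← Matrix.cramer_transpose_apply, Matrix.cramer_eq_adjugate_mulVec,
      ← Matrix.adjugate_transpose, Matrix.mulVec_transpose]
    rfl
  calc ∑ i, (A.updateRow i ((A * N).row i)).det = (A * N * A.adjugate).trace :=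
        sum_congr rfl fun i _ => det_updateRow i
    _ = (A.adjugate * A * N).trace := by rw [Matrix.trace_mul_comm, ← Matrix.mul_assoc]
    _ = A.det * N.trace := by
        rw [Matrix.adjugate_mul, Matrix.smul_mul, Matrix.one_mul, Matrix.trace_smul, smul_eq_mul]

/-- The square matrix whose `i`-th row is the `m i`-th standard basis vector, or zero if `n ≤ m i`.
Its determinant is the coefficient of `x ^ m` in the Vandermonde determinant `det (xᵢ ^ j)`. -/
def exponentMatrix (R : Type*) [CommRing R] (m : Fin n →₀ ℕ) : Matrix (Fin n) (Fin n) R :=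
  Matrix.of fun i j => if m i = j then 1 else 0

/-- The nilpotent matrix whose right multiplication sends the `j`-th standard basis row vector to
the next one, and the last one to zero. -/
def shiftMatrix (n : ℕ) (R : Type*) [CommRing R] : Matrix (Fin n) (Fin n) R :=
  Matrix.of fun i j => if (i : ℕ) + 1 = j then 1 else 0

theorem trace_shiftMatrix : (shiftMatrix n R).trace = 0 := by
  simp [shiftMatrix, Matrix.trace]

theorem exponentMatrix_single_add (m : Fin n →₀ ℕ) (i : Fin n) :
    exponentMatrix R (Finsupp.single i 1 + m) = (exponentMatrix R m).updateRow i
      ((exponentMatrix R m * shiftMatrix n R).row i) := by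
  ext j l
  rcases eq_or_ne j i with rfl | hji
  · rw [Matrix.updateRow_self]
    simp only [exponentMatrix, shiftMatrix, Matrix.row_apply, Matrix.mul_apply, Matrix.of_apply,
      Finsupp.add_apply, Finsupp.single_eq_same, ite_mul, one_mul, zero_mul]
    by_cases hm : m j < n
    · rw [sum_eq_single ⟨m j, hm⟩]
      · simp [add_comm]
      · exact fun b _ hb => if_neg fun h => hb (Fin.ext h.symm)
      · simp
    · rw [if_neg (by omega), sum_eq_zero]
      exact fun b _ => if_neg (by omega)
  · simp [Matrix.updateRow_ne hji, exponentMatrix, Ne.symm hji]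

theorem sum_det_exponentMatrix_single_add (m : Fin n →₀ ℕ) :
    ∑ i, (exponentMatrix R (Finsupp.single i 1 + m)).det = 0 := by
  simp only [exponentMatrix_single_add, sum_det_updateRow_mul, trace_shiftMatrix, mul_zero]

theorem det_exponentMatrix_eq_zero [NeZero n] {m : Fin n →₀ ℕ} (hm : ¬ IsStandard n m) :
    (exponentMatrix R m).det = 0 := by
  rw [IsStandard, not_and_or] at hm
  push Not at hm
  rcases hm with ⟨i, hi⟩ | hpos
  · exact Matrix.det_eq_zero_of_row_eq_zero i fun j => if_neg (j.2.trans_le hi).ne'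
  · exact Matrix.det_eq_zero_of_column_eq_zero 0 fun i => if_neg (hpos i)

/-- The linear functional pairing a polynomial with the Vandermonde determinant, regarded as an
element of the Macaulay inverse system: monomials are orthonormal. -/
noncomputable def vandermondePairing (n : ℕ) (R : Type*) [CommRing R] :
    MvPolynomial (Fin n) R →ₗ[R] R :=
  (basisMonomials (Fin n) R).constr R fun m => (exponentMatrix R m).det

theorem vandermondePairing_monomial (m : Fin n →₀ ℕ) :
    vandermondePairing n R (monomial m 1) = (exponentMatrix R m).det := by
  have pairing_basis := (basisMonomials (Fin n) R).constr_basis R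
    (fun m => (exponentMatrix R m).det) m
  rwa [coe_basisMonomials] at pairing_basis

theorem vandermondePairing_sum_X_mul (f : MvPolynomial (Fin n) R) :
    vandermondePairing n R ((∑ i, X i) * f) = 0 := by
  have pairing_comp_mul : vandermondePairing n R ∘ₗ LinearMap.mulLeft R (∑ i, X i) = 0 := by
    refine (basisMonomials (Fin n) R).ext fun m => ?_
    simp only [coe_basisMonomials, LinearMap.comp_apply, LinearMap.mulLeft_apply, sum_mul, map_sum,
      X, monomial_mul, mul_one, vandermondePairing_monomial, sum_det_exponentMatrix_single_add,
      LinearMap.zero_apply]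
  exact LinearMap.congr_fun pairing_comp_mul f

theorem vandermondePairing_eq_zero_of_mem [NeZero n] {d : ℕ} (hnd : n ≤ d)
    {f : MvPolynomial (Fin n) R} (hf : f ∈ powProdIdeal (Fin n) R d) :
    vandermondePairing n R f = 0 := by
  rw [vandermondePairing, Module.Basis.constr_apply]
  refine sum_eq_zero fun m _ => ?_
  by_cases hm : IsStandard d m
  · exact smul_eq_zero_of_left (mem_powProdIdeal_iff.1 hf m hm) _
  · exact smul_eq_zero_of_right _ (det_exponentMatrix_eq_zero fun h => hm (h.mono hnd))

/-- The exponent `(0, 1, …, n - 1)` of the diagonal term of the Vandermonde determinant. -/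
noncomputable def staircase (n : ℕ) : Fin n →₀ ℕ :=
  Finsupp.equivFunOnFinite.symm fun i => i

theorem degree_staircase (n : ℕ) : (staircase n).degree = n.choose 2 := by
  rw [Finsupp.degree_eq_sum, Nat.choose_two_right, ← sum_range_id]
  exact Fin.sum_univ_eq_sum_range (fun i => i) n

theorem exponentMatrix_staircase : exponentMatrix R (staircase n) = 1 := by
  ext i j
  simp [exponentMatrix, staircase, Matrix.one_apply, Fin.ext_iff]

theorem monomial_staircase_notMem_sup [Nontrivial R] [NeZero n] {d : ℕ} (hnd : n ≤ d) :
    monomial (staircase n) 1 ∉ powProdIdeal (Fin n) R d ⊔ Ideal.span {∑ i, X i} := by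
  intro h
  obtain ⟨f, hf, g, hg, hfg⟩ := Submodule.mem_sup.1 h
  obtain ⟨g, rfl⟩ := Ideal.mem_span_singleton.1 hg
  have pairing_eq_zero := congrArg (vandermondePairing n R) hfg
  rw [map_add, vandermondePairing_eq_zero_of_mem hnd hf, vandermondePairing_sum_X_mul,
    vandermondePairing_monomial, exponentMatrix_staircase, Matrix.det_one, add_zero]
    at pairing_eq_zero
  exact zero_ne_one pairing_eq_zero

theorem exists_forall_sub_sum_X_mul_notMem [Nontrivial R] [NeZero n] {d j : ℕ}
    (hnd : n ≤ d) (hj : j ≤ n.choose 2) :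
    ∃ g : MvPolynomial (Fin n) R, g.IsHomogeneous j ∧
      ∀ f, g - (∑ i, X i) * f ∉ powProdIdeal (Fin n) R d := by
  obtain ⟨m, hm, hdeg⟩ := (staircase n).exists_le_degree_eq j ((degree_staircase n).symm ▸ hj)
  refine ⟨monomial m 1, isHomogeneous_monomial 1 hdeg, fun f hf => ?_⟩
  have monomial_mem : monomial m 1 ∈ powProdIdeal (Fin n) R d ⊔ Ideal.span {∑ i, X i} :=
    Submodule.mem_sup.2 ⟨_, hf, _, Ideal.mem_span_singleton.2 ⟨f, rfl⟩, sub_add_cancel _ _⟩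
  refine monomial_staircase_notMem_sup (R := R) hnd ?_
  rw [← tsub_add_cancel_of_le hm, ← one_mul (1 : R), ← monomial_mul]
  exact Ideal.mul_mem_left _ _ monomial_mem

end Vandermonde

section FiveVariables

theorem card_boxPartitions_five_five_eight : #(boxPartitions 5 5 8) = 8 := by
  decide +kernel

theorem card_boxPartitions_five_five_nine : #(boxPartitions 5 5 9) = 7 := by
  decide +kernel

theorem powProdIdeal_fin_five (R : Type*) [CommSemiring R] :
    powProdIdeal (Fin 5) R 5 = Ideal.span {X 0 ^ 5, X 1 ^ 5, X 2 ^ 5, X 3 ^ 5, X 4 ^ 5,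
      X 0 * X 1 * X 2 * X 3 * X 4} := by
  have range_fin_five (x : Fin 5 → MvPolynomial (Fin 5) R) :
      Set.range x = {x 0, x 1, x 2, x 3, x 4} := by
    ext y
    simp [Fin.exists_fin_succ, eq_comm]
  rw [powProdIdeal, Fin.prod_univ_five, range_fin_five, ← Set.union_singleton]
  simp only [Set.insert_union, Set.singleton_union]

theorem stmt13_general {R : Type*} [CommRing R] [Nontrivial R] :
    ∀ k : ℕ, k = 8 ∨ k = 9 →
      (∃ f : MvPolynomial (Fin 5) R, f.IsHomogeneous k ∧
          f ∉ Ideal.span {X 0 ^ 5, X 1 ^ 5, X 2 ^ 5, X 3 ^ 5, X 4 ^ 5,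
              X 0 * X 1 * X 2 * X 3 * X 4} ∧
          (X 0 + X 1 + X 2 + X 3 + X 4) * f ∈ Ideal.span {X 0 ^ 5, X 1 ^ 5, X 2 ^ 5,
              X 3 ^ 5, X 4 ^ 5, X 0 * X 1 * X 2 * X 3 * X 4})
      ∧ (∃ g : MvPolynomial (Fin 5) R, g.IsHomogeneous (k + 1) ∧
          ∀ f : MvPolynomial (Fin 5) R, f.IsHomogeneous k →
            g - (X 0 + X 1 + X 2 + X 3 + X 4) * f ∉ Ideal.span {X 0 ^ 5, X 1 ^ 5,
              X 2 ^ 5, X 3 ^ 5, X 4 ^ 5, X 0 * X 1 * X 2 * X 3 * X 4}) := by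
  have sum_X : ∑ i : Fin 5, (X i : MvPolynomial (Fin 5) R) = X 0 + X 1 + X 2 + X 3 + X 4 :=
    Fin.sum_univ_five _
  rw [← powProdIdeal_fin_five, ← sum_X]
  have kernel_eight := exists_sum_X_mul_mem_of_card_boxPartitions_lt
    (R := R) (n := 5) (d := 5) (k := 8)
    (by rw [card_boxPartitions_five_five_eight, card_boxPartitions_five_five_nine]; norm_num)
  have kernel_nine := exists_mul_mem_powProdIdeal_succ (by simp) kernel_eight
  intro k hk
  constructor
  · rcases hk with rfl | rfl
    exacts [kernel_eight, kernel_nine]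
  · have degree_le : k + 1 ≤ Nat.choose 5 2 := by
      rcases hk with rfl | rfl <;> decide
    obtain ⟨g, hg, hgI⟩ :=
      exists_forall_sub_sum_X_mul_notMem (R := R) le_rfl degree_le
    exact ⟨g, hg, fun f _ => hgI f⟩

end FiveVariables

/-- For `S = K[x₁,…,x₅]` (char `K = 0`) and
`I = (x₁⁵,…,x₅⁵, x₁x₂x₃x₄x₅)`, multiplication by `x₁+⋯+x₅` from `(S/I)_k` to
`(S/I)_{k+1}` is neither injective nor surjective for `k = 8` and `k = 9`. -/
theorem stmt13 {K : Type*} [Field K] [CharZero K] :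
    ∀ k : ℕ, k = 8 ∨ k = 9 →
      (∃ f : MvPolynomial (Fin 5) K, f.IsHomogeneous k ∧
          f ∉ Ideal.span {X 0 ^ 5, X 1 ^ 5, X 2 ^ 5, X 3 ^ 5, X 4 ^ 5,
              X 0 * X 1 * X 2 * X 3 * X 4} ∧
          (X 0 + X 1 + X 2 + X 3 + X 4) * f ∈ Ideal.span {X 0 ^ 5, X 1 ^ 5, X 2 ^ 5,
              X 3 ^ 5, X 4 ^ 5, X 0 * X 1 * X 2 * X 3 * X 4})
      ∧ (∃ g : MvPolynomial (Fin 5) K, g.IsHomogeneous (k + 1) ∧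
          ∀ f : MvPolynomial (Fin 5) K, f.IsHomogeneous k →
            g - (X 0 + X 1 + X 2 + X 3 + X 4) * f ∉ Ideal.span {X 0 ^ 5, X 1 ^ 5,
              X 2 ^ 5, X 3 ^ 5, X 4 ^ 5, X 0 * X 1 * X 2 * X 3 * X 4}) :=
  stmt13_general
end
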